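/- arXiv:0805.0330 — 8 statements merged into one kernel-verified Lean document; each statement's English description precedes it below -/
import Mathlib

section
/- For every ATRA₁ 𝒜 = ⟨Σ, Q, q_I, F, δ⟩, the dual automaton 𝒜̄ recognises the complement over finite data trees: a finite data tree τ with alphabet Σ belongs to L^fin(𝒜̄) if and only if τ does not belong to L^fin(𝒜). In particular, ATRA₁ on finite data trees are closed under complement. -/
/-! ## Trees and data trees -/

abbrev Node : Type := List Bool

/-- A (possibly infinite) data tree over alphabet `A`, with data from `ℕ`.
It is represented by the partial labelling functions on nonleaf nodes:
`label n = some a` iff `n` is a nonleaf node labelled `a`, and similarly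
`dlabel` gives the datum at each nonleaf node. -/
structure DataTree (A : Type) where
  label : Node → Option A
  dlabel : Node → Option ℕ
  root_nonleaf : (label []).isSome
  domain_eq : ∀ n : Node, (dlabel n).isSome ↔ (label n).isSome
  tree_cond : ∀ (n : Node) (d : Bool), (label (n ++ [d])).isSome → (label n).isSome

namespace DataTree
variable {A : Type}

def Nonleaf (τ : DataTree A) (n : Node) : Prop := (τ.label n).isSome

/-- The set of nodes: the root together with both children of every nonleaf node. -/
def Nodes (τ : DataTree A) : Set Node :=
  {n | n = [] ∨ ∃ m d, n = m ++ [d] ∧ τ.Nonleaf m}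

def Leaf (τ : DataTree A) (n : Node) : Prop := n ∈ τ.Nodes ∧ ¬ τ.Nonleaf n

def Finite (τ : DataTree A) : Prop := {n | τ.Nonleaf n}.Finite

end DataTree

/-- A (possibly infinite) tree over alphabet `A` (a data tree without data). -/
structure BTree (A : Type) where
  label : Node → Option A
  root_nonleaf : (label []).isSome
  tree_cond : ∀ (n : Node) (d : Bool), (label (n ++ [d])).isSome → (label n).isSome

namespace BTree
variable {A : Type}
def Nonleaf (t : BTree A) (n : Node) : Prop := (t.label n).isSome
def Nodes (t : BTree A) : Set Node :=
  {n | n = [] ∨ ∃ m d, n = m ++ [d] ∧ t.Nonleaf m}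
def Leaf (t : BTree A) (n : Node) : Prop := n ∈ t.Nodes ∧ ¬ t.Nonleaf n
def Finite (t : BTree A) : Prop := {n | t.Nonleaf n}.Finite
end BTree

/-- The underlying tree of a data tree (erasing the data). -/
def DataTree.toTree {A : Type} (τ : DataTree A) : BTree A :=
  ⟨τ.label, τ.root_nonleaf, τ.tree_cond⟩

/-- `τ` and `τ'` have equal `l`-prefixes: they agree on all nodes of length `< l`
(hence their restrictions to nodes of length `≤ l` coincide). -/
def EqPrefix {A : Type} (τ τ' : DataTree A) (l : ℕ) : Prop :=
  ∀ n : Node, n.length < l → τ.label n = τ'.label n ∧ τ.dlabel n = τ'.dlabel n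

open Classical in
/-- The distance between data trees: `0` if they are equal, and otherwise `1/l`
where `l` is least such that the `l`-prefixes are distinct. -/
noncomputable def treeDist {A : Type} (τ τ' : DataTree A) : ℝ :=
  if τ = τ' then 0 else ((sInf {l : ℕ | ¬ EqPrefix τ τ' l} : ℕ) : ℝ)⁻¹

/-! ## Forward alternating tree 1-register automata (ATRA₁) -/

/-- Positive Boolean formulae over `Q`: atoms `q(d, ↓)` / `q(d, ¬↓)` are
`atom q d true` / `atom q d false`, where `d : Bool` is the direction. -/
inductive PosBool (Q : Type) : Type
  | atom : Q → Bool → Bool → PosBool Q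
  | tt : PosBool Q
  | ff : PosBool Q
  | and : PosBool Q → PosBool Q → PosBool Q
  | or : PosBool Q → PosBool Q → PosBool Q

/-- Satisfaction of a positive Boolean formula by a quadruple
`R d u` of subsets of `Q` (`d` = direction, `u = true` means register update `↓`). -/
def PosBool.Sat {Q : Type} (R : Bool → Bool → Set Q) : PosBool Q → Prop
  | .atom q d u => q ∈ R d u
  | .tt => True
  | .ff => False
  | .and φ ψ => φ.Sat R ∧ ψ.Sat R
  | .or φ ψ => φ.Sat R ∨ ψ.Sat R

/-- The dual of a positive Boolean formula: swaps `⊤`/`⊥` and `∧`/`∨`. -/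
def PosBool.dual {Q : Type} : PosBool Q → PosBool Q
  | .atom q d u => .atom q d u
  | .tt => .ff
  | .ff => .tt
  | .and φ ψ => .or φ.dual ψ.dual
  | .or φ ψ => .and φ.dual ψ.dual

def PosBool.map {Q Q' : Type} (f : Q → Q') : PosBool Q → PosBool Q'
  | .atom q d u => .atom (f q) d u
  | .tt => .tt
  | .ff => .ff
  | .and φ ψ => .and (φ.map f) (ψ.map f)
  | .or φ ψ => .or (φ.map f) (ψ.map f)

/-- A forward alternating tree 1-register automaton. -/
structure ATRA (A : Type) where
  Q : Type
  fin : Finite Q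
  qI : Q
  F : Set Q
  δ : Q → A → Bool → PosBool Q

namespace ATRA
variable {A : Type}

/-- The transition relation between configurations (finite sets of threads),
relative to a letter `a` and a datum `E`. -/
def Trans (M : ATRA A) (a : A) (E : ℕ) (G H0 H1 : Set (M.Q × ℕ)) : Prop :=
  ∀ q D, (q, D) ∈ G →
    ∃ R : Bool → Bool → Set M.Q,
      (M.δ q a (decide (D = E))).Sat R ∧
      ∀ d : Bool,
        (∀ r ∈ R d true, (r, E) ∈ (if d then H1 else H0)) ∧
        (∀ r ∈ R d false, (r, D) ∈ (if d then H1 else H0))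

/-- A run of `M` on a data tree `τ`. -/
structure Run (M : ATRA A) (τ : DataTree A) where
  G : Node → Set (M.Q × ℕ)
  finite : ∀ n : Node, (G n).Finite
  support : ∀ n : Node, n ∉ τ.Nodes → G n = ∅
  init : ∃ D : ℕ, τ.dlabel [] = some D ∧ (M.qI, D) ∈ G []
  step : ∀ (n : Node) (a : A) (D : ℕ), τ.label n = some a → τ.dlabel n = some D →
    M.Trans a D (G n) (G (n ++ [false])) (G (n ++ [true]))

def Run.Final {M : ATRA A} {τ : DataTree A} (ρ : M.Run τ) : Prop :=
  ∀ n, τ.Leaf n → ∀ q D, (q, D) ∈ ρ.G n → q ∈ M.F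

def Run.FiniteRun {M : ATRA A} {τ : DataTree A} (ρ : M.Run τ) : Prop :=
  ∃ l : ℕ, ∀ n : Node, l ≤ n.length → ρ.G n = ∅

/-- The language of `M` over finite data trees. -/
def Lfin (M : ATRA A) : Set (DataTree A) :=
  {τ | τ.Finite ∧ ∃ ρ : M.Run τ, ρ.Final}

/-- The safety language of `M`: data trees on which `M` has a final run. -/
def Lsaf (M : ATRA A) : Set (DataTree A) :=
  {τ | ∃ ρ : M.Run τ, ρ.Final}

/-- The co-safety language of `M`: data trees on which `M` has a final finite run. -/
def Lcos (M : ATRA A) : Set (DataTree A) :=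
  {τ | ∃ ρ : M.Run τ, ρ.Final ∧ ρ.FiniteRun}

/-- The dual automaton: final states complemented, transition formulae dualised. -/
def dual (M : ATRA A) : ATRA A :=
  ⟨M.Q, M.fin, M.qI, M.Fᶜ, fun q a b => (M.δ q a b).dual⟩

end ATRA

theorem PosBool.Sat.mono' {Q : Type} {R S : Bool → Bool → Set Q}
    (h : ∀ d u, R d u ⊆ S d u) (φ : PosBool Q) (hs : φ.Sat R) : φ.Sat S := by
  induction φ with
  | atom q d u => exact h d u hs
  | tt => trivial
  | ff => exact hs
  | and φ ψ ih1 ih2 => exact ⟨ih1 hs.1, ih2 hs.2⟩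
  | or φ ψ ih1 ih2 => exact hs.imp ih1 ih2

theorem PosBool.sat_dual' {Q : Type} {R S : Bool → Bool → Set Q}
    (h : ∀ d u q, q ∈ R d u ↔ q ∉ S d u) (φ : PosBool Q) :
    φ.dual.Sat R ↔ ¬ φ.Sat S := by
  induction φ with
  | atom q d u => exact h d u q
  | tt => simp [PosBool.dual, PosBool.Sat]
  | ff => simp [PosBool.dual, PosBool.Sat]
  | and φ ψ ih1 ih2 => simp only [PosBool.dual, PosBool.Sat, ih1, ih2]; tauto
  | or φ ψ ih1 ih2 => simp only [PosBool.dual, PosBool.Sat, ih1, ih2]; tauto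

/-- Acceptance of a thread from a node, explored down to a bounded depth. -/
def ATRA.Acc {A : Type} (M : ATRA A) (τ : DataTree A) : ℕ → Node → M.Q → ℕ → Prop
  | 0, _, q, _ => q ∈ M.F
  | k + 1, n, q, D =>
    (∀ a E, τ.label n = some a → τ.dlabel n = some E →
      (M.δ q a (decide (D = E))).Sat
        (fun d u => {r | ATRA.Acc M τ k (n ++ [d]) r (if u then E else D)})) ∧
    (τ.label n = none → q ∈ M.F)

theorem ATRA.acc_dual {A : Type} (M : ATRA A) (τ : DataTree A) (k : ℕ) :
    ∀ (n : Node) (q : M.Q) (D : ℕ), M.dual.Acc τ k n q D ↔ ¬ M.Acc τ k n q D := by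
  induction k with
  | zero => intro n q D; exact Iff.rfl
  | succ k ih =>
    intro n q D
    have hd := τ.domain_eq n
    rcases hl : τ.label n with _ | a
    · simp only [ATRA.Acc, hl]
      simp [ATRA.dual]
      exact Iff.rfl
    · rcases hE : τ.dlabel n with _ | E
      · simp [hl, hE] at hd
      · have h1 : M.dual.Acc τ (k+1) n q D ↔ (M.δ q a (decide (D = E))).dual.Sat
            (fun d u => {r | M.dual.Acc τ k (n ++ [d]) r (if u then E else D)}) := by
          simp [ATRA.Acc, hl, hE]; rfl
        have h2 : M.Acc τ (k+1) n q D ↔ (M.δ q a (decide (D = E))).Sat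
            (fun d u => {r | M.Acc τ k (n ++ [d]) r (if u then E else D)}) := by
          simp [ATRA.Acc, hl, hE]
        rw [h1, h2]
        exact PosBool.sat_dual' (fun d u r => ih _ _ _) _

theorem ATRA.acc_of_run {A : Type} (M : ATRA A) (τ : DataTree A) (L : ℕ)
    (hL : ∀ n, τ.Nonleaf n → n.length < L) (ρ : M.Run τ) (hρ : ρ.Final) (k : ℕ) :
    ∀ (n : Node) (q : M.Q) (D : ℕ), L ≤ k + n.length → (q, D) ∈ ρ.G n →
      M.Acc τ k n q D := by
  have hnode : ∀ n p, p ∈ ρ.G n → n ∈ τ.Nodes := by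
    intro n p hp
    by_contra hn
    rw [ρ.support n hn] at hp
    exact hp
  induction k with
  | zero =>
    intro n q D hk hq
    refine hρ n ⟨hnode _ _ hq, fun h => ?_⟩ q D hq
    have := hL n h
    omega
  | succ k ih =>
    intro n q D hk hq
    refine ⟨fun a E ha hE => ?_, fun h => ?_⟩
    · obtain ⟨R, hR, hR'⟩ := ρ.step n a E ha hE q D hq
      refine PosBool.Sat.mono' ?_ _ hR
      intro d u r hr
      apply ih
      · simp; omega
      · have := hR' d
        cases d <;> cases u <;> simp_all
    · exact hρ n ⟨hnode _ _ hq, by simp [DataTree.Nonleaf, h]⟩ q D hq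

theorem ATRA.run_of_acc {A : Type} (M : ATRA A) (τ : DataTree A) (hτ : τ.Finite) (L : ℕ)
    (hL : ∀ n, τ.Nonleaf n → n.length < L) (D₀ : ℕ) (hD₀ : τ.dlabel [] = some D₀)
    (h : M.Acc τ L [] M.qI D₀) : ∃ ρ : M.Run τ, ρ.Final := by
  have := M.fin
  let S : Set ℕ := {D | ∃ n, τ.dlabel n = some D}
  have hS : S.Finite := by
    refine (hτ.image (fun n => (τ.dlabel n).getD 0)).subset ?_
    rintro D ⟨n, hn⟩
    exact ⟨n, (τ.domain_eq n).1 (by simp [hn]), by simp [hn]⟩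
  refine ⟨⟨fun n => {p | n ∈ τ.Nodes ∧ p.2 ∈ S ∧ M.Acc τ (L - n.length) n p.1 p.2},
    ?_, ?_, ?_, ?_⟩, ?_⟩
  · intro n
    refine (Set.finite_univ.prod hS).subset ?_
    rintro ⟨q, D⟩ ⟨-, h2, -⟩
    exact ⟨trivial, h2⟩
  · intro n hn
    ext p
    simp [hn]
  · exact ⟨D₀, hD₀, Or.inl rfl, ⟨_, hD₀⟩, h⟩
  · rintro n a E ha hE q D ⟨h1, h2, h3⟩
    have hnl : τ.Nonleaf n := by simp [DataTree.Nonleaf, ha]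
    have hlt := hL n hnl
    obtain ⟨k, hk⟩ : ∃ k, L - n.length = k + 1 := ⟨L - n.length - 1, by omega⟩
    simp only [hk] at h3
    refine ⟨_, h3.1 a E ha hE, ?_⟩
    have hk' : L - (n.length + 1) = k := by omega
    have hn : ∀ d, n ++ [d] ∈ τ.Nodes := fun d => Or.inr ⟨n, d, rfl, hnl⟩
    have hES : E ∈ S := ⟨n, hE⟩
    intro d
    cases d <;> simp_all
  · rintro n ⟨hn, hleaf⟩ q D ⟨h1, h2, h3⟩
    have hl : τ.label n = none := by simpa [DataTree.Nonleaf] using hleaf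
    rcases hk : L - n.length with _ | k
    · simp only [hk] at h3
      exact h3
    · simp only [hk] at h3
      exact h3.2 hl

theorem ATRA.mem_Lfin_iff {A : Type} (M : ATRA A) (τ : DataTree A) (hτ : τ.Finite) (L : ℕ)
    (hL : ∀ n, τ.Nonleaf n → n.length < L) (D₀ : ℕ) (hD₀ : τ.dlabel [] = some D₀) :
    τ ∈ M.Lfin ↔ M.Acc τ L [] M.qI D₀ := by
  constructor
  · rintro ⟨-, ρ, hρ⟩
    obtain ⟨D, hD, hq⟩ := ρ.init
    rw [hD₀] at hD
    cases hD
    exact M.acc_of_run τ L hL ρ hρ L [] M.qI D₀ (by simp) hq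
  · intro h
    exact ⟨hτ, M.run_of_acc τ hτ L hL D₀ hD₀ h⟩

/-- The dual automaton recognises the complement over finite
data trees: a finite data tree belongs to `L^fin(𝒜̄)` iff it does not belong to
`L^fin(𝒜)`. In particular, ATRA₁ on finite data trees are closed under complement. -/
theorem atra_dual_complement_fin {A : Type} [Fintype A] (M : ATRA A)
    (τ : DataTree A) (hτ : τ.Finite) :
    τ ∈ M.dual.Lfin ↔ τ ∉ M.Lfin := by
  obtain ⟨B, hB⟩ := (hτ.image List.length).bddAbove
  have hL : ∀ n, τ.Nonleaf n → n.length < B + 1 := fun n hn =>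
    Nat.lt_succ_of_le (hB ⟨n, hn, rfl⟩)
  obtain ⟨D₀, hD₀⟩ := Option.isSome_iff_exists.1 ((τ.domain_eq []).2 τ.root_nonleaf)
  rw [M.dual.mem_Lfin_iff τ hτ _ hL D₀ hD₀, M.mem_Lfin_iff τ hτ _ hL D₀ hD₀]
  exact M.acc_dual τ _ _ _ _
end

section
/- For every ATRA₁ 𝒜 with alphabet Σ, the safety and co-safety modes are dual: a data tree τ with alphabet Σ belongs to L^cos(𝒜̄) if and only if τ does not belong to L^saf(𝒜); consequently τ belongs to L^saf(𝒜̄) if and only if τ does not belong to L^cos(𝒜). -/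
namespace ATRADual

theorem sat_mono {Q : Type} {R R' : Bool → Bool → Set Q} (h : ∀ d u, R d u ⊆ R' d u)
    (φ : PosBool Q) : φ.Sat R → φ.Sat R' := by
  induction φ with
  | atom q d u => exact fun hq => h d u hq
  | tt => exact id
  | ff => exact id
  | and φ ψ h1 h2 => exact fun hq => ⟨h1 hq.1, h2 hq.2⟩
  | or φ ψ h1 h2 => exact fun hq => hq.imp h1 h2

theorem sat_dual_inter {Q : Type} {R R' : Bool → Bool → Set Q}
    (φ : PosBool Q) : φ.Sat R → φ.dual.Sat R' → ∃ d u q, q ∈ R d u ∧ q ∈ R' d u := by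
  induction φ with
  | atom q d u => exact fun hq hq' => ⟨d, u, q, hq, hq'⟩
  | tt => exact fun _ h => h.elim
  | ff => exact fun h => h.elim
  | and φ ψ h1 h2 => exact fun hq hq' => hq'.elim (h1 hq.1) (h2 hq.2)
  | or φ ψ h1 h2 => exact fun hq hq' => hq.elim (fun h => h1 h hq'.1) (fun h => h2 h hq'.2)

theorem sat_dual_compl {Q : Type} {R : Bool → Bool → Set Q}
    (φ : PosBool Q) : ¬ φ.Sat R → φ.dual.Sat (fun d u => (R d u)ᶜ) := by
  induction φ with
  | atom q d u => exact fun hq => hq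
  | tt => exact fun h => h trivial
  | ff => exact fun _ => trivial
  | and φ ψ h1 h2 => exact fun hq => (not_and_or.1 hq).imp h1 h2
  | or φ ψ h1 h2 => exact fun hq => ⟨h1 (not_or.1 hq).1, h2 (not_or.1 hq).2⟩

theorem sat_union {Q : Type} {R : ℕ → Bool → Bool → Set Q}
    (hR : ∀ i j, i ≤ j → ∀ d u, R i d u ⊆ R j d u)
    (φ : PosBool Q) : φ.Sat (fun d u => {q | ∃ k, q ∈ R k d u}) → ∃ k, φ.Sat (R k) := by
  induction φ with
  | atom q d u => exact fun hq => hq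
  | tt => exact fun _ => ⟨0, trivial⟩
  | ff => exact fun h => h.elim
  | and φ ψ h1 h2 =>
    intro hq
    obtain ⟨i, hi⟩ := h1 hq.1
    obtain ⟨j, hj⟩ := h2 hq.2
    exact ⟨max i j, sat_mono (hR _ _ (le_max_left _ _)) _ hi,
      sat_mono (hR _ _ (le_max_right _ _)) _ hj⟩
  | or φ ψ h1 h2 =>
    intro hq
    rcases hq with hq | hq
    · exact (h1 hq).imp fun _ h => Or.inl h
    · exact (h2 hq).imp fun _ h => Or.inr h

variable {A : Type}

/-- The thread `(q, D)` at node `n` is accepted by `M` within `k` levels. -/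
def W (M : ATRA A) (τ : DataTree A) : ℕ → Node → M.Q → ℕ → Prop
  | 0, _, _, _ => False
  | k + 1, n, q, D => (τ.label n = none → q ∈ M.F) ∧
      ∀ a E, τ.label n = some a → τ.dlabel n = some E →
        (M.δ q a (decide (D = E))).Sat
          (fun d u => {r | W M τ k (n ++ [d]) r (if u then E else D)})

theorem W_succ (M : ATRA A) (τ : DataTree A) (k : ℕ) :
    ∀ n q D, W M τ k n q D → W M τ (k + 1) n q D := by
  induction k with
  | zero => exact fun _ _ _ h => h.elim
  | succ k ih =>
    intro n q D h
    exact ⟨h.1, fun a E ha hE => sat_mono (fun d u r hr => ih _ _ _ hr) _ (h.2 a E ha hE)⟩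

theorem W_mono (M : ATRA A) (τ : DataTree A) {i j : ℕ} (hij : i ≤ j) {n q D}
    (h : W M τ i n q D) : W M τ j n q D := by
  induction hij with
  | refl => exact h
  | step _ ih => exact W_succ _ _ _ _ _ _ ih

/-- The data occurring on the path to `n`. -/
def pathData (τ : DataTree A) (n : Node) : Set ℕ := {E | ∃ m, m <+: n ∧ τ.dlabel m = some E}

theorem pathData_finite (τ : DataTree A) (n : Node) : (pathData τ n).Finite := by
  refine (List.finite_toSet (n.inits.filterMap τ.dlabel)).subset ?_
  rintro E ⟨m, hm, hE⟩
  exact List.mem_filterMap.2 ⟨m, (List.mem_inits _ _).2 hm, hE⟩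

theorem mkRun (M : ATRA A) (τ : DataTree A) (P : Node → M.Q → ℕ → Prop)
    (hroot : ∀ D, τ.dlabel [] = some D → P [] M.qI D)
    (hstep : ∀ n q D a E, P n q D → τ.label n = some a → τ.dlabel n = some E →
      (M.δ q a (decide (D = E))).Sat
          (fun d u => {r | P (n ++ [d]) r (if u then E else D)}))
    (hfin : ∀ n q D, P n q D → τ.label n = none → q ∈ M.F) :
    ∃ ρ : M.Run τ, ρ.Final ∧ ∀ n q D, (q, D) ∈ ρ.G n → P n q D := by
  refine ⟨⟨fun n => {x | n ∈ τ.Nodes ∧ x.2 ∈ pathData τ n ∧ P n x.1 x.2}, ?_, ?_, ?_, ?_⟩, ?_, ?_⟩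
  · intro n
    have := M.fin
    exact ((Set.finite_univ (α := M.Q)).prod (pathData_finite τ n)).subset
      fun x hx => ⟨trivial, hx.2.1⟩
  · intro n hn
    ext x
    simp [hn]
  · obtain ⟨D, hD⟩ := Option.isSome_iff_exists.1 ((τ.domain_eq []).2 τ.root_nonleaf)
    exact ⟨D, hD, Or.inl rfl, ⟨[], List.prefix_rfl, hD⟩, hroot D hD⟩
  · intro n a E ha hE q D hq
    have hnode : ∀ d, n ++ [d] ∈ τ.Nodes := fun d =>
      Or.inr ⟨n, d, rfl, by simp [DataTree.Nonleaf, ha]⟩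
    obtain ⟨m, hm, hmD⟩ := hq.2.1
    refine ⟨_, hstep n q D a E hq.2.2 ha hE, fun d => ?_⟩
    have h1 : E ∈ pathData τ (n ++ [d]) := ⟨n, List.prefix_append _ _, hE⟩
    have h2 : D ∈ pathData τ (n ++ [d]) := ⟨m, hm.trans (List.prefix_append _ _), hmD⟩
    have := hnode d
    cases d
    · exact ⟨fun r hr => ⟨this, h1, hr⟩, fun r hr => ⟨this, h2, hr⟩⟩
    · exact ⟨fun r hr => ⟨this, h1, hr⟩, fun r hr => ⟨this, h2, hr⟩⟩
  · intro n hn q D hq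
    exact hfin n q D hq.2.2 (by simpa [DataTree.Nonleaf] using hn.2)
  · exact fun n q D h => h.2.2

theorem run_step {M : ATRA A} {τ : DataTree A} (ρ : M.Run τ) {n q D a E}
    (h : (q, D) ∈ ρ.G n) (ha : τ.label n = some a) (hE : τ.dlabel n = some E) :
    (M.δ q a (decide (D = E))).Sat
          (fun d u => {r | (r, if u then E else D) ∈ ρ.G (n ++ [d])}) := by
  obtain ⟨R, hR, hR'⟩ := ρ.step n a E ha hE q D h
  refine sat_mono (fun d u r hr => ?_) _ hR
  have := hR' d
  cases d <;> cases u
  · exact this.2 r hr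
  · exact this.1 r hr
  · exact this.2 r hr
  · exact this.1 r hr

theorem run_leaf {M : ATRA A} {τ : DataTree A} (ρ : M.Run τ) (hρ : ρ.Final) {n q D}
    (h : (q, D) ∈ ρ.G n) (hn : τ.label n = none) : q ∈ M.F := by
  refine hρ n ⟨?_, by simp [DataTree.Nonleaf, hn]⟩ q D h
  by_contra hc
  rw [ρ.support n hc] at h
  exact h

theorem cos_iff (M : ATRA A) (τ : DataTree A) {D₀ : ℕ} (hD : τ.dlabel [] = some D₀) :
    τ ∈ M.Lcos ↔ ∃ k, W M τ k [] M.qI D₀ := by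
  constructor
  · rintro ⟨ρ, hρ, l, hl⟩
    have key : ∀ k n q D, l ≤ n.length + k → (q, D) ∈ ρ.G n → W M τ k n q D := by
      intro k
      induction k with
      | zero =>
        intro n q D hk h
        rw [hl n hk] at h
        exact h.elim
      | succ k ih =>
        intro n q D hk h
        refine ⟨run_leaf ρ hρ h, fun a E ha hE => ?_⟩
        refine sat_mono (fun d u r hr => ?_) _ (run_step ρ h ha hE)
        exact ih _ _ _ (by simp; omega) hr
    obtain ⟨D, hD', h⟩ := ρ.init
    obtain rfl : D₀ = D := by simpa [hD] using hD'
    exact ⟨l, key l _ _ _ (by simp) h⟩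
  · rintro ⟨k, hk⟩
    obtain ⟨ρ, hρ, h⟩ := mkRun M τ (fun n q D => W M τ (k - n.length) n q D)
      (by
        intro D hD'
        obtain rfl : D₀ = D := by simpa [hD] using hD'
        exact hk)
      (by
        intro n q D a E h ha hE
        rcases hj : k - n.length with _ | j
        · rw [hj] at h
          exact h.elim
        · rw [hj] at h
          refine sat_mono (fun d u r hr => ?_) _ (h.2 a E ha hE)
          have : k - (n ++ [d]).length = j := by simp; omega
          show W M τ _ _ _ _
          rw [this]
          exact hr)
      (by
        intro n q D h hn
        rcases hj : k - n.length with _ | j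
        · rw [hj] at h
          exact h.elim
        · rw [hj] at h
          exact h.1 hn)
    refine ⟨ρ, hρ, k, fun n hn => Set.eq_empty_of_forall_notMem fun x hx => ?_⟩
    have := h n x.1 x.2 hx
    rw [Nat.sub_eq_zero_of_le hn] at this
    exact this

theorem saf_iff (M : ATRA A) (τ : DataTree A) {D₀ : ℕ} (hD : τ.dlabel [] = some D₀) :
    τ ∈ M.Lsaf ↔ ∀ k, ¬ W M.dual τ k [] M.qI D₀ := by
  constructor
  · rintro ⟨ρ, hρ⟩
    have key : ∀ k n (q : M.Q) D, (q, D) ∈ ρ.G n → ¬ W M.dual τ k n q D := by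
      intro k
      induction k with
      | zero => exact fun _ _ _ _ h => h
      | succ k ih =>
        intro n q D h hW
        rcases ha : τ.label n with _ | a
        · exact hW.1 ha (run_leaf ρ hρ h ha)
        · obtain ⟨E, hE⟩ := Option.isSome_iff_exists.1
            ((τ.domain_eq n).2 (by simp [ha]))
          obtain ⟨d, u, r, h1, h2⟩ := sat_dual_inter _ (run_step ρ h ha hE) (hW.2 a E ha hE)
          exact ih _ _ _ h1 h2
    obtain ⟨D, hD', h⟩ := ρ.init
    obtain rfl : D₀ = D := by simpa [hD] using hD'
    exact fun k => key k _ _ _ h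
  · intro hk
    obtain ⟨ρ, hρ, h⟩ := mkRun M τ (fun n q D => ∀ k, ¬ W M.dual τ k n q D)
      (by
        intro D hD'
        obtain rfl : D₀ = D := by simpa [hD] using hD'
        exact hk)
      (by
        intro n q D a E h ha hE
        by_contra hc
        have h1 := sat_dual_compl _ hc
        obtain ⟨k, h2⟩ := sat_union
          (R := fun k d u => {r | W M.dual τ k (n ++ [d]) r (if u then E else D)})
          (fun i j hij d u r hr => W_mono _ _ hij hr) _
          (sat_mono (fun d u r hr => not_forall_not.1 hr) _ h1)
        refine h (k + 1) ⟨fun h' => by simp [ha] at h', fun a' E' ha' hE' => ?_⟩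
        obtain rfl : a = a' := by simpa [ha] using ha'
        obtain rfl : E = E' := by simpa [hE] using hE'
        exact h2)
      (by
        intro n q D h hn
        by_contra hc
        exact h 1 ⟨fun _ => hc, fun a E ha => by simp [hn] at ha⟩)
    exact ⟨ρ, hρ⟩

theorem dual_dual_form {Q : Type} (φ : PosBool Q) : φ.dual.dual = φ := by
  induction φ with
  | atom q d u => rfl
  | tt => rfl
  | ff => rfl
  | and φ ψ h1 h2 => simp [PosBool.dual, h1, h2]
  | or φ ψ h1 h2 => simp [PosBool.dual, h1, h2]

theorem dual_dual (M : ATRA A) : M.dual.dual = M := by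
  obtain ⟨Q, fin, qI, F, δ⟩ := M
  have h1 : Fᶜᶜ = F := compl_compl F
  have h2 : (fun q a b => (δ q a b).dual.dual) = δ := by
    funext q a b
    exact dual_dual_form _
  show ATRA.mk Q fin qI Fᶜᶜ (fun q a b => (δ q a b).dual.dual) = ATRA.mk Q fin qI F δ
  rw [h1, h2]

theorem main (M : ATRA A) (τ : DataTree A) : τ ∈ M.dual.Lcos ↔ τ ∉ M.Lsaf := by
  obtain ⟨D, hD⟩ := Option.isSome_iff_exists.1 ((τ.domain_eq []).2 τ.root_nonleaf)
  rw [cos_iff _ _ hD, saf_iff _ _ hD, not_forall_not]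
  rfl

end ATRADual

/-- Safety and co-safety modes are dual: `τ ∈ L^cos(𝒜̄)` iff
`τ ∉ L^saf(𝒜)`, and consequently `τ ∈ L^saf(𝒜̄)` iff `τ ∉ L^cos(𝒜)`. -/
theorem atra_dual_saf_cos {A : Type} [Fintype A] (M : ATRA A) (τ : DataTree A) :
    (τ ∈ M.dual.Lcos ↔ τ ∉ M.Lsaf) ∧ (τ ∈ M.dual.Lsaf ↔ τ ∉ M.Lcos) := by
  refine ⟨ATRADual.main M τ, ?_⟩
  have h := ATRADual.main M.dual τ
  rw [ATRADual.dual_dual] at h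
  rw [h, not_not]
end

section
/- (Lazy simulation of faulty counter steps) Let k ∈ ℕ and let l be an instruction in L = {inc, dec, ifz} × {1, …, k}. For all counter valuations v, w, w' : {1,…,k} → ℕ: if v ≤ w pointwise and w →^l w', then there exists a counter valuation v' such that v →^l_♭ v' and v' ≤ w' pointwise. -/
/-! ## Counters with incrementing errors -/

/-- A counter valuation on `k` counters. -/
abbrev Val (k : ℕ) : Type := Fin k → ℕ

/-- Pointwise order on counter valuations. -/
def ValLE {k : ℕ} (v w : Val k) : Prop := ∀ c, v c ≤ w c

/-- Instructions over `k` counters: increment, decrement, zero-test. -/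
inductive Instr (k : ℕ) : Type
  | inc : Fin k → Instr k
  | dec : Fin k → Instr k
  | ifz : Fin k → Instr k

/-- Error-free steps. -/
def StepExact {k : ℕ} : Instr k → Val k → Val k → Prop
  | .inc c, v, v' => v' = Function.update v c (v c + 1)
  | .dec c, v, v' => 0 < v c ∧ v' = Function.update v c (v c - 1)
  | .ifz c, v, v' => v c = 0 ∧ v' = v

/-- Steps with incrementing errors. -/
def StepErr {k : ℕ} (l : Instr k) (v v' : Val k) : Prop :=
  ∃ vs vs', ValLE v vs ∧ StepExact l vs vs' ∧ ValLE vs' v'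

/-- Lazy steps: either error-free, or a decrement of `0` erroneously yields `0`. -/
def StepLazy {k : ℕ} (l : Instr k) (v v' : Val k) : Prop :=
  StepExact l v v' ∨ ∃ c, l = Instr.dec c ∧ v c = 0 ∧ v' = v

/-! ## Incrementing tree counter automata (ITCA) -/

/-- A forward incrementing tree counter automaton with ε-transitions. -/
structure ITCA (A : Type) where
  Q : Type
  fin : Finite Q
  qI : Q
  F : Set Q
  k : ℕ
  δ : Set (Q × A × Instr k × Q × Q)
  δε : Set (Q × Instr k × Q)

namespace ITCA
variable {A : Type}

/-- A run of `C` on a finite tree: a block (nonempty sequence of configurations,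
consecutive ones related by ε-transitions with incrementing errors) at each node. -/
structure Run (C : ITCA A) (t : BTree A) where
  B : Node → List (C.Q × Val C.k)
  nonempty : ∀ n ∈ t.Nodes, B n ≠ []
  block : ∀ n ∈ t.Nodes,
    List.Chain' (fun x y => ∃ l, (x.1, l, y.1) ∈ C.δε ∧ StepErr l x.2 y.2) (B n)
  init : (B []).head? = some (C.qI, fun _ => 0)
  step : ∀ (n : Node) (a : A), t.label n = some a →
    ∃ q v l r0 r1 w0 w1,
      (B n).getLast? = some (q, v) ∧
      (q, a, l, r0, r1) ∈ C.δ ∧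
      StepErr l v w0 ∧ StepErr l v w1 ∧
      (B (n ++ [false])).head? = some (r0, w0) ∧
      (B (n ++ [true])).head? = some (r1, w1)

def Run.Accepting {C : ITCA A} {t : BTree A} (ρ : C.Run t) : Prop :=
  ∀ n, t.Leaf n → ∀ q v, (ρ.B n).getLast? = some (q, v) → q ∈ C.F

/-- The language of `C`: finite trees on which `C` has an accepting run. -/
def Lang (C : ITCA A) : Set (BTree A) :=
  {t | t.Finite ∧ ∃ ρ : C.Run t, ρ.Accepting}

/-- The transition relation between levels (finite sets of configurations):
each non-final configuration is replaced by the configuration(s) some firable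
transition yields lazily, and final configurations are removed. -/
def LevelStep (C : ITCA A) (G G' : Set (C.Q × Val C.k)) : Prop :=
  ∃ f : C.Q × Val C.k → Set (C.Q × Val C.k),
    (∀ x ∈ G, x.1 ∉ C.F →
      (∃ a l r0 r1 w0 w1, (x.1, a, l, r0, r1) ∈ C.δ ∧
        StepLazy l x.2 w0 ∧ StepLazy l x.2 w1 ∧ f x = {(r0, w0), (r1, w1)}) ∨
      (∃ l r w, (x.1, l, r) ∈ C.δε ∧ StepLazy l x.2 w ∧ f x = {(r, w)})) ∧
    G' = ⋃ x ∈ {y ∈ G | y.1 ∉ C.F}, f x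

end ITCA

/-- The quasi-order on levels: each configuration of `G` is dominated
(same state, pointwise smaller-or-equal valuation) by some configuration of `H`. -/
def LevelLE {Q : Type} {k : ℕ} (G H : Set (Q × Val k)) : Prop :=
  ∀ x ∈ G, ∃ y ∈ H, x.1 = y.1 ∧ ValLE x.2 y.2

/-- (Lazy simulation of faulty counter steps) If `v ≤ w`
pointwise and `w →^l w'` (step with incrementing errors), then there is `v'`
with `v →^l_♭ v'` (lazy step) and `v' ≤ w'` pointwise. -/
theorem lazy_simulation {k : ℕ} (l : Instr k) (v w w' : Val k)
    (hvw : ValLE v w) (hstep : StepErr l w w') :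
    ∃ v' : Val k, StepLazy l v v' ∧ ValLE v' w' := by
  obtain ⟨s, s', hws, hex, hs'⟩ := hstep
  have hvs : ∀ c, v c ≤ s c := fun c => (hvw c).trans (hws c)
  cases l with
  | inc c =>
    simp only [StepExact] at hex
    subst hex
    refine ⟨Function.update v c (v c + 1), Or.inl rfl, fun d => ?_⟩
    have h1 := hs' d
    have h2 := hvs d
    by_cases hd : d = c
    · subst hd
      simp only [Function.update_self] at h1 ⊢
      omega
    · simp only [Function.update_of_ne hd] at h1 ⊢
      omega
  | dec c =>
    obtain ⟨hpos, rfl⟩ := hex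
    by_cases h0 : v c = 0
    · refine ⟨v, Or.inr ⟨c, rfl, h0, rfl⟩, fun d => ?_⟩
      have h1 := hs' d
      have h2 := hvs d
      by_cases hd : d = c
      · subst hd
        omega
      · simp only [Function.update_of_ne hd] at h1
        omega
    · refine ⟨Function.update v c (v c - 1),
        Or.inl ⟨Nat.pos_of_ne_zero h0, rfl⟩, fun d => ?_⟩
      have h1 := hs' d
      have h2 := hvs d
      by_cases hd : d = c
      · subst hd
        simp only [Function.update_self] at h1 ⊢
        omega
      · simp only [Function.update_of_ne hd] at h1 ⊢
        omega
  | ifz c =>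
    obtain ⟨hz, rfl⟩ := hex
    have h2 := hvs c
    exact ⟨v, Or.inl ⟨by omega, rfl⟩, fun d => (hvs d).trans (hs' d)⟩
end

section
/- For every ITCA 𝒞, the quasi-order ≼ on levels is strongly downward-compatible with the level transition relation →: whenever 𝒢 ≼ ℋ and ℋ → ℋ', there exists a level 𝒢' such that 𝒢 → 𝒢' and 𝒢' ≼ ℋ'. -/
theorem stepLazy_mono {k : ℕ} (l : Instr k) (v w w' : Val k) (h : ValLE v w)
    (hs : StepLazy l w w') : ∃ v', StepLazy l v v' ∧ ValLE v' w' := by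
  cases l with
  | inc c =>
    rcases hs with hs | ⟨c', hc, _⟩
    · refine ⟨_, Or.inl rfl, fun d => ?_⟩
      have hs' : w' = Function.update w c (w c + 1) := hs
      subst hs'
      have h1 := h c
      have h2 := h d
      by_cases hd : d = c
      · subst hd; simp; exact h1
      · simp [hd]; exact h2
    · cases hc
  | dec c =>
    by_cases hv : v c = 0
    · refine ⟨v, Or.inr ⟨c, rfl, hv, rfl⟩, fun d => ?_⟩
      rcases hs with ⟨_, hs⟩ | ⟨c', _, _, hs⟩
      · subst hs
        by_cases hd : d = c
        · subst hd; omega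
        · simp [hd]; exact h d
      · subst hs; exact h d
    · refine ⟨_, Or.inl ⟨Nat.pos_of_ne_zero hv, rfl⟩, fun d => ?_⟩
      have h1 := h c
      rcases hs with ⟨_, hs⟩ | ⟨c', hc, h0, hs⟩
      · subst hs
        by_cases hd : d = c
        · subst hd; simp; omega
        · simp [hd]; exact h d
      · cases hc; omega
  | ifz c =>
    rcases hs with ⟨h0, hs⟩ | ⟨c', hc, _⟩
    · have h1 := h c
      subst hs
      exact ⟨v, Or.inl ⟨by omega, rfl⟩, h⟩
    · cases hc

/-- `≼` is strongly downward-compatible with the level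
transition relation of an ITCA: if `𝒢 ≼ ℋ` and `ℋ → ℋ'`, then `𝒢 → 𝒢'` for some
level `𝒢' ≼ ℋ'`. -/
theorem levelstep_downward_compatible {A : Type} [Fintype A] (C : ITCA A)
    (G H H' : Set (C.Q × Val C.k)) (hG : G.Finite) (hH : H.Finite)
    (hle : LevelLE G H) (hstep : C.LevelStep H H') :
    ∃ G' : Set (C.Q × Val C.k), G'.Finite ∧ C.LevelStep G G' ∧ LevelLE G' H' := by
  classical
  obtain ⟨f, hf, rfl⟩ := hstep
  have key : ∀ x : C.Q × Val C.k, ∃ S : Set (C.Q × Val C.k), x ∈ G → x.1 ∉ C.F →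
      S.Finite ∧
      ((∃ a l r0 r1 w0 w1, (x.1, a, l, r0, r1) ∈ C.δ ∧
        StepLazy l x.2 w0 ∧ StepLazy l x.2 w1 ∧ S = {(r0, w0), (r1, w1)}) ∨
      (∃ l r w, (x.1, l, r) ∈ C.δε ∧ StepLazy l x.2 w ∧ S = {(r, w)})) ∧
      LevelLE S (⋃ x ∈ {y ∈ H | y.1 ∉ C.F}, f x) := by
    intro x
    by_cases hx : x ∈ G ∧ x.1 ∉ C.F
    swap
    · exact ⟨∅, fun h1 h2 => absurd ⟨h1, h2⟩ hx⟩
    obtain ⟨hxG, hxF⟩ := hx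
    obtain ⟨y, hyH, hxy, hv⟩ := hle x hxG
    have hyF : y.1 ∉ C.F := hxy ▸ hxF
    have hsub : ∀ z ∈ f y, z ∈ ⋃ x ∈ {y ∈ H | y.1 ∉ C.F}, f x := fun z hz =>
      Set.mem_biUnion (show y ∈ {y ∈ H | y.1 ∉ C.F} from ⟨hyH, hyF⟩) hz
    rcases hf y hyH hyF with ⟨a, l, r0, r1, w0, w1, hδ, h0, h1, he⟩ | ⟨l, r, w, hδ, h0, he⟩
    · obtain ⟨u0, hu0, hl0⟩ := stepLazy_mono l x.2 y.2 w0 hv h0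
      obtain ⟨u1, hu1, hl1⟩ := stepLazy_mono l x.2 y.2 w1 hv h1
      refine ⟨{(r0, u0), (r1, u1)}, fun _ _ => ⟨Set.toFinite _,
        Or.inl ⟨a, l, r0, r1, u0, u1, hxy ▸ hδ, hu0, hu1, rfl⟩, ?_⟩⟩
      rintro z (rfl | rfl)
      · exact ⟨(r0, w0), hsub _ (by simp [he]), rfl, hl0⟩
      · exact ⟨(r1, w1), hsub _ (by simp [he]), rfl, hl1⟩
    · obtain ⟨u0, hu0, hl0⟩ := stepLazy_mono l x.2 y.2 w hv h0
      refine ⟨{(r, u0)}, fun _ _ => ⟨Set.toFinite _,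
        Or.inr ⟨l, r, u0, hxy ▸ hδ, hu0, rfl⟩, ?_⟩⟩
      rintro z rfl
      exact ⟨(r, w), hsub _ (by simp [he]), rfl, hl0⟩
  choose g hg using key
  refine ⟨⋃ x ∈ {y ∈ G | y.1 ∉ C.F}, g x, ?_, ⟨g, fun x h1 h2 => (hg x h1 h2).2.1, rfl⟩, ?_⟩
  · exact (hG.subset (Set.sep_subset _ _)).biUnion fun x hx => (hg x hx.1 hx.2).1
  · intro z hz
    obtain ⟨x, hx, hzx⟩ := Set.mem_iUnion₂.1 hz
    exact (hg x hx.1 hx.2).2.2 z hzx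
end

section
/- For every ITCA 𝒞, the set of levels 𝒢 from which there exists an infinite sequence of level transitions 𝒢 = 𝒢₀ → 𝒢₁ → 𝒢₂ → ⋯ is downward closed with respect to ≼: if ℋ admits such an infinite sequence and 𝒢 ≼ ℋ, then 𝒢 also admits such an infinite sequence. -/
theorem stepLazy_mono_aux {k : ℕ} {l : Instr k} {v w w' : Val k} (hvw : ValLE v w)
    (h : StepLazy l w w') : ∃ v', StepLazy l v v' ∧ ValLE v' w' := by
  cases l with
  | inc c =>
    rcases h with h | ⟨c', h, _⟩
    · refine ⟨Function.update v c (v c + 1), Or.inl rfl, fun d => ?_⟩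
      have h' : w' = Function.update w c (w c + 1) := h
      subst h'
      have := hvw d
      have := hvw c
      by_cases hd : d = c
      · subst hd; simpa using this
      · simpa [hd] using hvw d
    · cases h
  | dec c =>
    have h' : ∀ d, w' d = if d = c then w c - 1 else w d := by
      intro d
      rcases h with h | ⟨c', h, h0, rfl⟩
      · have h2 : w' = Function.update w c (w c - 1) := h.2
        simp [h2, Function.update_apply]
      · cases h
        split_ifs with hd
        · subst hd; omega
        · rfl
    by_cases hv : v c = 0
    · refine ⟨v, Or.inr ⟨c, rfl, hv, rfl⟩, fun d => ?_⟩
      rw [h' d]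
      split_ifs with hd
      · subst hd; omega
      · exact hvw d
    · refine ⟨Function.update v c (v c - 1), Or.inl ⟨Nat.pos_of_ne_zero hv, rfl⟩, fun d => ?_⟩
      rw [h' d, Function.update_apply]
      have := hvw c
      split_ifs with hd
      · omega
      · exact hvw d
  | ifz c =>
    rcases h with h | ⟨c', h, _⟩
    · obtain ⟨h0, rfl⟩ : w c = 0 ∧ w' = w := h
      have := hvw c
      have hv : v c = 0 := by omega
      exact ⟨v, Or.inl ⟨hv, rfl⟩, hvw⟩
    · cases h

theorem levelStep_mono_aux {A : Type} (C : ITCA A) {G H H' : Set (C.Q × Val C.k)}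
    (hle : LevelLE G H) (hs : C.LevelStep H H') :
    ∃ G', C.LevelStep G G' ∧ LevelLE G' H' := by
  classical
  obtain ⟨f, hf, rfl⟩ := hs
  have key : ∀ x : C.Q × Val C.k, ∃ S : Set (C.Q × Val C.k), x ∈ G → x.1 ∉ C.F →
      ((∃ a l r0 r1 w0 w1, (x.1, a, l, r0, r1) ∈ C.δ ∧
        StepLazy l x.2 w0 ∧ StepLazy l x.2 w1 ∧ S = {(r0, w0), (r1, w1)}) ∨
      (∃ l r w, (x.1, l, r) ∈ C.δε ∧ StepLazy l x.2 w ∧ S = {(r, w)})) ∧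
      LevelLE S (⋃ x ∈ {y ∈ H | y.1 ∉ C.F}, f x) := by
    intro x
    by_cases hx : x ∈ G ∧ x.1 ∉ C.F
    swap
    · exact ⟨∅, fun h1 h2 => absurd ⟨h1, h2⟩ hx⟩
    obtain ⟨hxG, hxF⟩ := hx
    obtain ⟨y, hyH, hxy, hv⟩ := hle x hxG
    have hyF : y.1 ∉ C.F := hxy ▸ hxF
    have hsub : ∀ z ∈ f y, z ∈ ⋃ x ∈ {y ∈ H | y.1 ∉ C.F}, f x := fun z hz =>
      Set.mem_biUnion (show y ∈ {y ∈ H | y.1 ∉ C.F} from ⟨hyH, hyF⟩) hz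
    rcases hf y hyH hyF with ⟨a, l, r0, r1, w0, w1, hd, h0, h1, hfy⟩ | ⟨l, r, w, hd, h0, hfy⟩
    · obtain ⟨u0, hu0, hl0⟩ := stepLazy_mono_aux hv h0
      obtain ⟨u1, hu1, hl1⟩ := stepLazy_mono_aux hv h1
      refine ⟨{(r0, u0), (r1, u1)}, fun _ _ =>
        ⟨Or.inl ⟨a, l, r0, r1, u0, u1, by rw [hxy]; exact hd, hu0, hu1, rfl⟩, ?_⟩⟩
      rintro z (rfl | rfl)
      · exact ⟨(r0, w0), hsub _ (by rw [hfy]; exact Or.inl rfl), rfl, hl0⟩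
      · exact ⟨(r1, w1), hsub _ (by rw [hfy]; exact Or.inr rfl), rfl, hl1⟩
    · obtain ⟨u0, hu0, hl0⟩ := stepLazy_mono_aux hv h0
      refine ⟨{(r, u0)}, fun _ _ =>
        ⟨Or.inr ⟨l, r, u0, by rw [hxy]; exact hd, hu0, rfl⟩, ?_⟩⟩
      rintro z rfl
      exact ⟨(r, w), hsub _ (by rw [hfy]; exact rfl), rfl, hl0⟩
  choose g hg using key
  refine ⟨_, ⟨g, fun x hx hF => (hg x hx hF).1, rfl⟩, ?_⟩
  intro z hz
  obtain ⟨x, ⟨hx, hF⟩, hz⟩ := Set.mem_iUnion₂.1 hz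
  exact (hg x hx hF).2 z hz

/-- The set of levels admitting an infinite sequence of level
transitions is downward closed with respect to `≼`. -/
theorem levelstep_infinite_downward_closed {A : Type} [Fintype A] (C : ITCA A)
    (G H : Set (C.Q × Val C.k)) (hG : G.Finite) (hH : H.Finite)
    (hle : LevelLE G H)
    (seq : ℕ → Set (C.Q × Val C.k))
    (h0 : seq 0 = H) (hstep : ∀ i, C.LevelStep (seq i) (seq (i + 1))) :
    ∃ seq' : ℕ → Set (C.Q × Val C.k),
      seq' 0 = G ∧ ∀ i, C.LevelStep (seq' i) (seq' (i + 1)) := by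
  subst h0
  choose nxt hn1 hn2 using fun (i : ℕ) (K : {K // LevelLE K (seq i)}) =>
    levelStep_mono_aux C K.2 (hstep i)
  let S : (i : ℕ) → {K // LevelLE K (seq i)} := fun i =>
    Nat.rec (motive := fun i => {K // LevelLE K (seq i)}) ⟨G, hle⟩
      (fun i K => ⟨nxt i K, hn2 i K⟩) i
  exact ⟨fun i => (S i).1, rfl, fun i => hn1 i (S i)⟩
end

section
/- (Soundness of the data abstraction) Let 𝒜 = ⟨Σ, Q, q_I, F, δ⟩ be an ATRA₁. Whenever G →_a^E H₀, H₁ is a concrete transition between configurations of 𝒜, the abstract transition v →_a^{Q_=} w₀, w₁ holds, where v = Ḡ, w₀ = H̄₀ and w₁ = H̄₁ are the abstractions of G, H₀, H₁, and Q_= = {q : ⟨q, E⟩ ∈ G} is the bundle of E in G. -/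
/-! ## The data abstraction for ATRA₁ configurations -/

/-- The bundle of a datum `D` in a configuration `G`. -/
def Bundle {Q : Type} (G : Set (Q × ℕ)) (D : ℕ) : Set Q := {q | (q, D) ∈ G}

/-- The abstraction of a configuration: for each (nonempty) `S ⊆ Q`, the number
of data whose bundle equals `S`. -/
noncomputable def AbstractOf {Q : Type} (G : Set (Q × ℕ)) : Set Q → ℕ :=
  fun S => Set.ncard {D : ℕ | Bundle G D = S}

/-- `⟨S, i⟩` is an abstract datum of the abstract configuration `v`. -/
def AbsDatum {Q : Type} (v : Set Q → ℕ) (S : Set Q) (i : ℕ) : Prop :=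
  S.Nonempty ∧ 1 ≤ i ∧ i ≤ v S

open Classical in
/-- The abstract transition relation `v →_a^{Q_=} w₀, w₁`. -/
def ATRA.AbsTrans {A : Type} (M : ATRA A) (a : A) (Qeq : Set M.Q)
    (v w0 w1 : Set M.Q → ℕ) : Prop :=
  (0 < v Qeq ∨ Qeq = ∅) ∧
  ∃ R' : Set M.Q → ℕ → Bool → Bool → Set M.Q,
    (∀ S i, AbsDatum v S i → ∀ q ∈ S,
      ∃ R : Bool → Bool → Set M.Q,
        (M.δ q a (decide (S = Qeq ∧ i = 1))).Sat R ∧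
        ∀ d u, R d u ⊆ R' S i d u) ∧
    (∀ d : Bool,
      ∃ Req : Set M.Q,
        R' Qeq 1 d false ⊆ Req ∧
        (∀ S i, AbsDatum v S i → R' S i d true ⊆ Req) ∧
        (∀ S' : Set M.Q, S'.Nonempty →
          Set.ncard {p : Set M.Q × ℕ |
              AbsDatum v p.1 p.2 ∧ p ≠ (Qeq, 1) ∧ R' p.1 p.2 d false = S'} +
            (if Req = S' then 1 else 0) ≤ (if d then w1 else w0) S'))

/-- An abstract run of `M` on a finite tree `t`. -/
structure ATRA.AbsRun {A : Type} (M : ATRA A) (t : BTree A) where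
  v : Node → Set M.Q → ℕ
  step : ∀ (n : Node) (a : A), t.label n = some a →
    ∃ Qeq : Set M.Q,
      M.AbsTrans a Qeq (v n) (v (n ++ [false])) (v (n ++ [true])) ∧
      (n = [] → M.qI ∈ Qeq)

/-- An abstract run is accepting iff at every leaf, `v_n(S) = 0` for all `S ⊄ F`. -/
def ATRA.AbsRun.Accepting {A : Type} {M : ATRA A} {t : BTree A}
    (ρ : M.AbsRun t) : Prop :=
  ∀ n, t.Leaf n → ∀ S : Set M.Q, ¬ S ⊆ M.F → ρ.v n S = 0

theorem enum_aux (T : Set ℕ) (E : ℕ) :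
    ∃ f : ℕ → ℕ, (∀ i, 1 ≤ i → i ≤ T.ncard → f i ∈ T) ∧
      (∀ i j, 1 ≤ i → i ≤ T.ncard → 1 ≤ j → j ≤ T.ncard → f i = f j → i = j) ∧
      (E ∈ T → f 1 = E) := by
  classical
  by_cases hT : T.Finite
  swap
  · have h0 : T.ncard = 0 := Set.Infinite.ncard hT
    refine ⟨fun _ => E, ?_, ?_, fun _ => rfl⟩
    · intro i h1 h2; omega
    · intro i j h1 h2; omega
  have hcard : T.ncard = hT.toFinset.card := Set.ncard_eq_toFinset_card T hT
  have e : Fin T.ncard ≃ T := by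
    have : Fintype T := hT.fintype
    exact (Fintype.equivFinOfCardEq (by
      rw [← Nat.card_eq_fintype_card, Nat.card_coe_set_eq])).symm
  let g : ℕ → ℕ := fun i => if h : i - 1 < T.ncard then (e ⟨i - 1, h⟩ : ℕ) else 0
  have hg : ∀ i, 1 ≤ i → i ≤ T.ncard → g i ∈ T := by
    intro i h1 h2
    have h : i - 1 < T.ncard := by omega
    simp only [g, dif_pos h]
    exact (e ⟨i - 1, h⟩).2
  have hgi : ∀ i j, 1 ≤ i → i ≤ T.ncard → 1 ≤ j → j ≤ T.ncard → g i = g j → i = j := by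
    intro i j h1 h2 h3 h4 h5
    have h : i - 1 < T.ncard := by omega
    have h' : j - 1 < T.ncard := by omega
    simp only [g, dif_pos h, dif_pos h'] at h5
    have := e.injective (Subtype.ext h5)
    simp only [Fin.mk.injEq] at this
    omega
  by_cases hE : E ∈ T
  · have hpos : 1 ≤ T.ncard := (Set.ncard_pos hT).2 ⟨E, hE⟩
    refine ⟨fun i => Equiv.swap (g 1) E (g i), ?_, ?_, ?_⟩
    · intro i h1 h2
      have ha := hg i h1 h2
      have hb := hg 1 le_rfl hpos
      simp only [Equiv.swap_apply_def]
      split_ifs <;> assumption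
    · intro i j h1 h2 h3 h4 h5
      exact hgi i j h1 h2 h3 h4 ((Equiv.swap (g 1) E).injective h5)
    · intro _
      simp
  · exact ⟨g, hg, hgi, fun h => absurd h hE⟩

theorem bundle_finite {Q : Type} (H : Set (Q × ℕ)) (hH : H.Finite) (S : Set Q)
    (hS : S.Nonempty) : {D : ℕ | Bundle H D = S}.Finite := by
  obtain ⟨q, hq⟩ := hS
  refine (hH.image Prod.snd).subset ?_
  intro D hD
  have hD' : Bundle H D = S := hD
  rw [← hD'] at hq
  exact ⟨(q, D), hq, rfl⟩

/-- (Soundness of the data abstraction) Every concrete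
transition `G →_a^E H₀, H₁` of an ATRA₁ is matched by the abstract transition
`Ḡ →_a^{Q_=} H̄₀, H̄₁`, where `Q_=` is the bundle of `E` in `G`. -/
theorem abstraction_sound {A : Type} [Fintype A] (M : ATRA A) (a : A) (E : ℕ)
    (G H0 H1 : Set (M.Q × ℕ)) (hG : G.Finite) (hH0 : H0.Finite) (hH1 : H1.Finite)
    (htr : M.Trans a E G H0 H1) :
    M.AbsTrans a (Bundle G E) (AbstractOf G) (AbstractOf H0) (AbstractOf H1) := by
  classical
  have hex : ∀ S : Set M.Q, _ := fun S => enum_aux {D : ℕ | Bundle G D = S} E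
  choose f hf hinj hfE using hex
  have hfE' : f (Bundle G E) 1 = E := hfE _ rfl
  refine ⟨?_, fun S i d u => Bundle (if d then H1 else H0) (if u then E else f S i), ?_, ?_⟩
  · rcases Set.eq_empty_or_nonempty (Bundle G E) with h | h
    · exact Or.inr h
    · exact Or.inl ((Set.ncard_pos (bundle_finite G hG _ h)).2 ⟨E, rfl⟩)
  · rintro S i ⟨hS, h1, h2⟩ q hq
    have hm : Bundle G (f S i) = S := hf S i h1 h2
    have hqG : (q, f S i) ∈ G := by rw [← hm] at hq; exact hq
    obtain ⟨R, hR, hRd⟩ := htr q (f S i) hqG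
    have hiff : (f S i = E) ↔ (S = Bundle G E ∧ i = 1) := by
      constructor
      · intro h
        have hSE : S = Bundle G E := by rw [← h, hm]
        subst hSE
        exact ⟨rfl, hinj _ i 1 h1 h2 le_rfl (le_trans h1 h2) (by rw [h, hfE'])⟩
      · rintro ⟨rfl, rfl⟩
        exact hfE'
    refine ⟨R, ?_, ?_⟩
    · have : decide (S = Bundle G E ∧ i = 1) = decide (f S i = E) := by
        simp only [hiff]
      convert hR using 2
    · intro d u r hr
      cases u
      · exact (hRd d).2 r hr
      · exact (hRd d).1 r hr
  · intro d
    refine ⟨Bundle (if d then H1 else H0) E, ?_, ?_, ?_⟩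
    · simp [hfE']
    · intro S i _
      simp
    · intro S' hS'
      set H : Set (M.Q × ℕ) := if d then H1 else H0 with hHdef
      have hH : H.Finite := by rw [hHdef]; split_ifs <;> assumption
      have hw : (if d then AbstractOf H1 else AbstractOf H0) S' =
          Set.ncard {D : ℕ | Bundle H D = S'} := by
        cases d <;> rfl
      rw [hw]
      have hfin := bundle_finite H hH S' hS'
      set P : Set (Set M.Q × ℕ) := {p | AbsDatum (AbstractOf G) p.1 p.2 ∧
        p ≠ (Bundle G E, 1) ∧ Bundle H (if false = true then E else f p.1 p.2) = S'} with hP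
      have hPinj : Set.InjOn (fun p : Set M.Q × ℕ => f p.1 p.2) P := by
        rintro ⟨S, i⟩ ⟨⟨_, h1, h2⟩, _, _⟩ ⟨T, j⟩ ⟨⟨_, h3, h4⟩, _, _⟩ h
        simp only at h h1 h2 h3 h4
        have e1 : Bundle G (f S i) = S := hf S i h1 h2
        have e2 : Bundle G (f T j) = T := hf T j h3 h4
        have hST : S = T := by rw [← e1, ← e2, h]
        subst hST
        rw [hinj S i j h1 h2 h3 h4 h]
      have hne : E ∉ (fun p : Set M.Q × ℕ => f p.1 p.2) '' P := by
        rintro ⟨⟨S, i⟩, ⟨⟨_, h1, h2⟩, hn, _⟩, h⟩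
        simp only at h h1 h2
        have e1 : Bundle G (f S i) = S := hf S i h1 h2
        have hSE : S = Bundle G E := by rw [← h, e1]
        subst hSE
        exact hn (by rw [hinj _ i 1 h1 h2 le_rfl (le_trans h1 h2) (by rw [h, hfE'])])
      have hsub : (fun p : Set M.Q × ℕ => f p.1 p.2) '' P ⊆ {D : ℕ | Bundle H D = S'} := by
        rintro _ ⟨⟨S, i⟩, ⟨_, _, h⟩, rfl⟩
        simpa using h
      have hcard : P.ncard = ((fun p : Set M.Q × ℕ => f p.1 p.2) '' P).ncard :=
        (Set.ncard_image_of_injOn hPinj).symm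
      rw [hcard]
      split_ifs with hE
      · rw [← Set.ncard_insert_of_notMem hne (hfin.subset hsub)]
        exact Set.ncard_le_ncard (Set.insert_subset hE hsub) hfin
      · exact Set.ncard_le_ncard hsub hfin
end

section
/- (Completeness of the data abstraction) Let 𝒜 = ⟨Σ, Q, q_I, F, δ⟩ be an ATRA₁. Whenever G is a configuration with abstraction Ḡ = v and the abstract transition v →_a^{Q_=} w₀, w₁ holds, there exist a datum E and configurations H₀, H₁ such that G →_a^E H₀, H₁, the abstractions satisfy H̄₀ = w₀ and H̄₁ = w₁, and Q_= = {q : ⟨q, E⟩ ∈ G} is the bundle of E in G. -/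
theorem extend_bundles {Q : Type} [Finite Q] (B : ℕ → Set Q) (w : Set Q → ℕ)
    (hfin : {D | (B D).Nonempty}.Finite)
    (hle : ∀ S : Set Q, S.Nonempty → Set.ncard {D | B D = S} ≤ w S) :
    ∃ H : Set (Q × ℕ), H.Finite ∧ (∀ S : Set Q, S.Nonempty → AbstractOf H S = w S) ∧
      ∀ D, ∀ q ∈ B D, (q, D) ∈ H := by
  classical
  let X := Σ S : {S : Set Q // S.Nonempty}, Fin (w S.1 - Set.ncard {D | B D = S.1})
  have hXf : Finite X := inferInstance
  have hinf : Infinite ↥({D | (B D).Nonempty}ᶜ) := hfin.infinite_compl.to_subtype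
  let e0 : X ↪ ↥({D | (B D).Nonempty}ᶜ) :=
    ((Finite.equivFin X).toEmbedding.trans Fin.valEmbedding).trans (Infinite.natEmbedding _)
  let e : X → ℕ := fun x => (e0 x).1
  have einj : Function.Injective e := fun x y h => e0.injective (Subtype.ext h)
  have eB : ∀ x, B (e x) = ∅ := fun x => Set.not_nonempty_iff_eq_empty.mp (e0 x).2
  let B' : ℕ → Set Q := fun D => if h : ∃ x, e x = D then (Classical.choose h).1.1 else B D
  have hB'e : ∀ x, B' (e x) = x.1.1 := by
    intro x
    have h : ∃ y, e y = e x := ⟨x, rfl⟩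
    have h2 : Classical.choose h = x := einj (Classical.choose_spec h)
    simp only [B', dif_pos h, h2]
  have hB'n : ∀ D, (¬ ∃ x, e x = D) → B' D = B D := by
    intro D h
    simp only [B', dif_neg h]
  refine ⟨{p | p.1 ∈ B' p.2}, ?_, ?_, ?_⟩
  · have : ({p : Q × ℕ | p.1 ∈ B' p.2}) ⊆
        Set.univ ×ˢ ({D | (B D).Nonempty} ∪ Set.range e) := by
      rintro ⟨q, D⟩ h
      refine ⟨trivial, ?_⟩
      by_cases hx : ∃ x, e x = D
      · exact Or.inr hx
      · left
        have h' : q ∈ B' D := h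
        rw [hB'n D hx] at h'
        exact ⟨q, h'⟩
    exact (Set.finite_univ.prod (hfin.union (Set.finite_range e))).subset this
  · intro S hS
    have hset : {D : ℕ | Bundle {p : Q × ℕ | p.1 ∈ B' p.2} D = S} =
        {D | B D = S} ∪ Set.range (fun i => e ⟨⟨S, hS⟩, i⟩) := by
      ext D
      have : Bundle {p : Q × ℕ | p.1 ∈ B' p.2} D = B' D := rfl
      simp only [Set.mem_ofPred_eq, this, Set.mem_union, Set.mem_range]
      by_cases hx : ∃ x, e x = D
      · obtain ⟨⟨⟨T, hT⟩, i⟩, rfl⟩ := hx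
        rw [hB'e, eB]
        constructor
        · intro h
          right
          simp only at h
          subst h
          exact ⟨i, rfl⟩
        · rintro (h | ⟨j, h⟩)
          · exact absurd h.symm hS.ne_empty
          · have := einj h
            exact (congrArg (fun x : X => x.1.1) this).symm
      · rw [hB'n D hx]
        constructor
        · exact Or.inl
        · rintro (h | ⟨i, h⟩)
          · exact h
          · exact absurd ⟨_, h⟩ hx
    unfold AbstractOf
    have hfS : {D | B D = S}.Finite := hfin.subset (fun D h => by
        have h' : B D = S := h
        change (B D).Nonempty
        rw [h']; exact hS)
    rw [hset, Set.ncard_union_eq ?_ hfS (Set.finite_range _)]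
    · have : (Set.range (fun i => e ⟨⟨S, hS⟩, i⟩)).ncard = w S - Set.ncard {D | B D = S} := by
        rw [← Set.image_univ, Set.ncard_image_of_injective, Set.ncard_univ]
        · simp
        · intro i j h
          have := einj h
          exact eq_of_heq (Sigma.mk.inj this).2
      rw [this]
      have := hle S hS
      omega
    · rw [Set.disjoint_left]
      rintro D h ⟨i, rfl⟩
      simp only [Set.mem_ofPred_eq, eB] at h
      exact hS.ne_empty h.symm
  · intro D q hq
    change q ∈ B' D
    rw [hB'n D]
    · exact hq
    · rintro ⟨x, rfl⟩
      rw [eB] at hq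
      exact hq

/-- (Completeness of the data abstraction) If `Ḡ = v` and the
abstract transition `v →_a^{Q_=} w₀, w₁` holds, then there exist a datum `E` and
configurations `H₀, H₁` with `G →_a^E H₀, H₁`, `H̄₀ = w₀`, `H̄₁ = w₁`, and `Q_=`
the bundle of `E` in `G`. -/
theorem abstraction_complete {A : Type} [Fintype A] (M : ATRA A) (a : A)
    (G : Set (M.Q × ℕ)) (hG : G.Finite) (Qeq : Set M.Q)
    (v w0 w1 : Set M.Q → ℕ)
    (hv : ∀ S : Set M.Q, S.Nonempty → AbstractOf G S = v S)
    (habs : M.AbsTrans a Qeq v w0 w1) :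
    ∃ (E : ℕ) (H0 H1 : Set (M.Q × ℕ)), H0.Finite ∧ H1.Finite ∧
      M.Trans a E G H0 H1 ∧
      (∀ S : Set M.Q, S.Nonempty → AbstractOf H0 S = w0 S) ∧
      (∀ S : Set M.Q, S.Nonempty → AbstractOf H1 S = w1 S) ∧
      Bundle G E = Qeq := by
  classical
  have hQ : Finite M.Q := M.fin
  obtain ⟨hQeq, R', hR, hd⟩ := habs
  have hsupp : {D | (Bundle G D).Nonempty}.Finite :=
    (hG.image Prod.snd).subset (by rintro D ⟨q, hq⟩; exact ⟨(q, D), hq, rfl⟩)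
  have hfib : ∀ S : Set M.Q, S.Nonempty → {D | Bundle G D = S}.Finite := by
    intro S hS
    refine hsupp.subset (fun D h => ?_)
    have h' : Bundle G D = S := h
    change (Bundle G D).Nonempty
    rw [h']; exact hS
  have hnum : ∀ S : Set M.Q, ∃ f : ℕ → ℕ, S.Nonempty →
      Set.BijOn f {D | Bundle G D = S} (Set.Icc 1 (v S)) := by
    intro S
    by_cases hS : S.Nonempty
    · have := (hfib S hS).exists_bijOn_of_encard_eq (t := Set.Icc 1 (v S)) (by
        rw [← (hfib S hS).cast_ncard_eq, ← (Set.finite_Icc 1 (v S)).cast_ncard_eq]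
        have h1 : Set.ncard {D | Bundle G D = S} = v S := hv S hS
        rw [h1]
        simp [Set.ncard_eq_toFinset_card'])
      obtain ⟨f, hf⟩ := this
      exact ⟨f, fun _ => hf⟩
    · exact ⟨id, fun h => absurd h hS⟩
  choose f hf using hnum
  have hdat : ∀ D, (Bundle G D).Nonempty → AbsDatum v (Bundle G D) (f (Bundle G D) D) := by
    intro D h
    have := (hf _ h).mapsTo (show D ∈ {D' | Bundle G D' = Bundle G D} from rfl)
    exact ⟨h, this.1, this.2⟩
  have hinj : ∀ D D', (Bundle G D).Nonempty → Bundle G D = Bundle G D' →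
      f (Bundle G D) D = f (Bundle G D') D' → D = D' := by
    intro D D' h hb he
    rw [← hb] at he
    exact (hf _ h).injOn rfl hb.symm he
  obtain ⟨E, hE, hE1⟩ : ∃ E, Bundle G E = Qeq ∧ (Qeq.Nonempty → f Qeq E = 1) := by
    by_cases hne : Qeq.Nonempty
    · have hpos : 0 < v Qeq := hQeq.resolve_right hne.ne_empty
      obtain ⟨E, hE, h1⟩ := (hf Qeq hne).surjOn (show 1 ∈ Set.Icc 1 (v Qeq) from ⟨le_rfl, hpos⟩)
      exact ⟨E, hE, fun _ => h1⟩
    · obtain ⟨E, hE⟩ := hsupp.infinite_compl.nonempty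
      refine ⟨E, ?_, fun h => absurd h hne⟩
      rw [Set.not_nonempty_iff_eq_empty.mp hne]
      exact Set.not_nonempty_iff_eq_empty.mp hE
  have hiff : ∀ D, (Bundle G D).Nonempty →
      ((Bundle G D = Qeq ∧ f (Bundle G D) D = 1) ↔ D = E) := by
    intro D h
    constructor
    · rintro ⟨h1, h2⟩
      refine hinj D E h (h1.trans hE.symm) ?_
      rw [h2, hE, hE1 (h1 ▸ h)]
    · rintro rfl
      refine ⟨hE, ?_⟩
      rw [hE]
      exact hE1 (hE ▸ h)
  have key : ∀ d : Bool, ∃ H : Set (M.Q × ℕ), H.Finite ∧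
      (∀ S : Set M.Q, S.Nonempty → AbstractOf H S = (if d then w1 else w0) S) ∧
      ∀ D, (Bundle G D).Nonempty →
        (∀ r ∈ R' (Bundle G D) (f (Bundle G D) D) d true, (r, E) ∈ H) ∧
        (∀ r ∈ R' (Bundle G D) (f (Bundle G D) D) d false, (r, D) ∈ H) := by
    intro d
    obtain ⟨Req, hReq1, hReq2, hcount⟩ := hd d
    let B : ℕ → Set M.Q := fun D => if D = E then Req else
      if (Bundle G D).Nonempty then R' (Bundle G D) (f (Bundle G D) D) d false else ∅
    have hBE : B E = Req := by simp [B]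
    have hBD : ∀ D, D ≠ E → (Bundle G D).Nonempty →
        B D = R' (Bundle G D) (f (Bundle G D) D) d false := by
      intro D h1 h2
      simp [B, h1, h2]
    have hBn : ∀ D, D ≠ E → (B D).Nonempty → (Bundle G D).Nonempty := by
      intro D h1 h2
      by_contra h3
      simp [B, h1, h3] at h2
    have hBfin : {D | (B D).Nonempty}.Finite := by
      refine (hsupp.insert E).subset (fun D h => ?_)
      by_cases hDE : D = E
      · exact Or.inl hDE
      · exact Or.inr (hBn D hDE h)
    have hle : ∀ S : Set M.Q, S.Nonempty →
        Set.ncard {D | B D = S} ≤ (if d then w1 else w0) S := by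
      intro S hS
      refine le_trans ?_ (hcount S hS)
      have hsub : {D | B D = S} ⊆ {D | D ≠ E ∧ B D = S} ∪ (if Req = S then {E} else ∅) := by
        intro D h
        have h' : B D = S := h
        by_cases hDE : D = E
        · right
          subst hDE
          rw [if_pos (hBE.symm.trans h')]
          rfl
        · exact Or.inl ⟨hDE, h'⟩
      have hf1 : {D | D ≠ E ∧ B D = S}.Finite := hBfin.subset (fun D h => by
        change (B D).Nonempty
        rw [h.2]; exact hS)
      have hf2 : (if Req = S then ({E} : Set ℕ) else ∅).Finite := by
        split_ifs <;> simp
      refine (Set.ncard_le_ncard hsub (hf1.union hf2)).trans ?_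
      refine (Set.ncard_union_le _ _).trans (Nat.add_le_add ?_ ?_)
      · refine Set.ncard_le_ncard_of_injOn (fun D => (Bundle G D, f (Bundle G D) D)) ?_ ?_ ?_
        · rintro D ⟨h1, h2⟩
          have hn : (Bundle G D).Nonempty := hBn D h1 (h2 ▸ hS)
          refine ⟨hdat D hn, ?_, ?_⟩
          · intro h
            simp only [Prod.mk.injEq] at h
            exact h1 ((hiff D hn).mp h)
          · rw [← h2, hBD D h1 hn]
        · rintro D ⟨h1, h2⟩ D' _ h
          simp only [Prod.mk.injEq] at h
          exact hinj D D' (hBn D h1 (h2 ▸ hS)) h.1 h.2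
        · have : (⋃ S : Set M.Q, ({S} : Set (Set M.Q)) ×ˢ Set.Icc 1 (v S)).Finite :=
            Set.finite_iUnion (fun S => (Set.finite_singleton S).prod (Set.finite_Icc _ _))
          refine this.subset ?_
          rintro ⟨T, i⟩ ⟨h, -⟩
          exact Set.mem_iUnion.mpr ⟨T, rfl, h.2.1, h.2.2⟩
      · split_ifs <;> simp
    obtain ⟨H, hH1, hH2, hH3⟩ := extend_bundles B _ hBfin hle
    refine ⟨H, hH1, hH2, fun D hD => ⟨fun r hr => ?_, fun r hr => ?_⟩⟩
    · apply hH3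
      rw [hBE]
      exact hReq2 _ _ (hdat D hD) hr
    · apply hH3
      by_cases hDE : D = E
      · obtain ⟨h1, h2⟩ := (hiff D hD).mpr hDE
        rw [h2, h1] at hr
        rw [hDE, hBE]
        exact hReq1 hr
      · rw [hBD D hDE hD]
        exact hr
  choose H hHf hHa hHt using key
  refine ⟨E, H false, H true, hHf _, hHf _, ?_, by simpa using hHa false,
    by simpa using hHa true, hE⟩
  intro q D hq
  have hn : (Bundle G D).Nonempty := ⟨q, hq⟩
  obtain ⟨R, hsat, hsub⟩ := hR _ _ (hdat D hn) q hq
  refine ⟨R, ?_, ?_⟩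
  · have hdec : decide (D = E) = decide (Bundle G D = Qeq ∧ f (Bundle G D) D = 1) :=
      decide_eq_decide.mpr (hiff D hn).symm
    rw [hdec]
    convert hsat
  · intro d
    have hifd : (if d then H true else H false) = H d := by cases d <;> rfl
    rw [hifd]
    exact ⟨fun r hr => (hHt d D hn).1 r (hsub d true hr),
      fun r hr => (hHt d D hn).2 r (hsub d false hr)⟩
end

section
/- For every ATRA₁ 𝒜 with alphabet Σ and every finite tree t with alphabet Σ: 𝒜 has an accepting abstract run on t if and only if 𝒜 has a final run on some finite data tree τ with tree(τ) = t. -/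
theorem exists_index (X : Set ℕ) (hX : X.Finite) (x0 : ℕ) :
    ∃ f : ℕ → ℕ, Set.BijOn f X (Set.Icc 1 X.ncard) ∧ (x0 ∈ X → f x0 = 1) := by
  have hc : X.encard = (Set.Icc 1 X.ncard).encard := by
    rw [← hX.cast_ncard_eq, ← (Set.finite_Icc 1 X.ncard).cast_ncard_eq]
    congr 1
    rw [Set.ncard_eq_toFinset_card' (Set.Icc 1 X.ncard)]
    simp
  obtain ⟨f, hf⟩ := hX.exists_bijOn_of_encard_eq hc
  by_cases h0 : x0 ∈ X
  · refine ⟨fun x => Equiv.swap (f x0) 1 (f x), ?_, fun _ => by simp⟩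
    have hfx := hf.mapsTo h0
    have h1 : (1 : ℕ) ∈ Set.Icc 1 X.ncard := by
      simp only [Set.mem_Icc] at hfx ⊢
      omega
    have hs : Set.BijOn (Equiv.swap (f x0) 1) (Set.Icc 1 X.ncard) (Set.Icc 1 X.ncard) := by
      have hm : Set.MapsTo (Equiv.swap (f x0) 1) (Set.Icc 1 X.ncard) (Set.Icc 1 X.ncard) := by
        intro y hy
        rw [Equiv.swap_apply_def]
        split_ifs
        · exact h1
        · exact hfx
        · exact hy
      refine ⟨hm, (Equiv.injective _).injOn, fun y hy => ⟨_, hm hy, ?_⟩⟩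
      simp
    exact hs.comp hf
  · exact ⟨f, hf, fun h => absurd h h0⟩

theorem finite_data {Q : Type} {G : Set (Q × ℕ)} (hG : G.Finite) :
    {D : ℕ | (Bundle G D).Nonempty}.Finite := by
  refine (hG.image Prod.snd).subset ?_
  rintro D ⟨q, hq⟩
  exact ⟨(q, D), hq, rfl⟩

theorem finite_bundle {Q : Type} {G : Set (Q × ℕ)} (hG : G.Finite) {S : Set Q}
    (hS : S.Nonempty) : {D : ℕ | Bundle G D = S}.Finite := by
  refine (finite_data hG).subset ?_
  intro D hD
  simp only [Set.mem_setOf_eq] at hD ⊢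
  rw [hD]; exact hS

theorem finite_absData {Q : Type} [Finite Q] (v : Set Q → ℕ) :
    {p : Set Q × ℕ | AbsDatum v p.1 p.2}.Finite := by
  have : {p : Set Q × ℕ | AbsDatum v p.1 p.2} ⊆
      ⋃ S : Set Q, (fun i => (S, i)) '' (Set.Icc 1 (v S)) := by
    rintro ⟨S, i⟩ ⟨_, h1, h2⟩
    exact Set.mem_iUnion.2 ⟨S, i, ⟨h1, h2⟩, rfl⟩
  exact (Set.finite_iUnion fun S => (Set.finite_Icc _ _).image _).subset this

/-- Concrete configuration bounded by an abstract one. -/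
def Bounded {Q : Type} (G : Set (Q × ℕ)) (v : Set Q → ℕ) : Prop :=
  G.Finite ∧ ∀ S : Set Q, S.Nonempty → AbstractOf G S ≤ v S

theorem bounded_empty {Q : Type} (v : Set Q → ℕ) : Bounded (∅ : Set (Q × ℕ)) v := by
  refine ⟨Set.finite_empty, fun S hS => ?_⟩
  have : {D : ℕ | Bundle (∅ : Set (Q × ℕ)) D = S} = ∅ := by
    ext D
    simp only [Set.mem_setOf_eq, Set.mem_empty_iff_false, iff_false]
    rintro rfl
    obtain ⟨q, hq⟩ := hS
    exact hq
  simp [AbstractOf, this]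

/-- Concrete transitions abstract to abstract transitions. -/
theorem abs_of_trans {A : Type} (M : ATRA A) (a : A) (E : ℕ) (G H0 H1 : Set (M.Q × ℕ))
    (hG : G.Finite) (hH0 : H0.Finite) (hH1 : H1.Finite) (h : M.Trans a E G H0 H1) :
    M.AbsTrans a (Bundle G E) (AbstractOf G) (AbstractOf H0) (AbstractOf H1) := by
  classical
  haveI := M.fin
  have hidx : ∀ S : Set M.Q, ∃ g : ℕ → ℕ,
      (S.Nonempty → (Set.MapsTo g (Set.Icc 1 (AbstractOf G S)) {D | Bundle G D = S} ∧
        Set.InjOn g (Set.Icc 1 (AbstractOf G S)))) ∧ (Bundle G E = S → g 1 = E) := by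
    intro S
    by_cases hS : S.Nonempty
    · obtain ⟨f, hf, hf1⟩ := exists_index _ (finite_bundle hG hS) E
      have hinv := (Set.BijOn.invOn_invFunOn hf)
      have hg := hf.symm hinv.symm
      refine ⟨_, fun _ => ⟨hg.mapsTo, hg.injOn⟩, fun hE => ?_⟩
      rw [← hf1 hE]
      exact hinv.1 hE
    · exact ⟨fun _ => E, fun h' => absurd h' hS, fun _ => rfl⟩
  choose g hg hgE using hidx
  have hfinE : ∀ S, S.Nonempty → Bundle G E = S → 0 < AbstractOf G S := by
    intro S hS hE
    exact (Set.ncard_pos (finite_bundle hG hS)).2 ⟨E, hE⟩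
  refine ⟨?_, fun S i d u => Bundle (if d then H1 else H0) (if u then E else g S i), ?_, ?_⟩
  · by_cases hE : (Bundle G E).Nonempty
    · exact Or.inl (hfinE _ hE rfl)
    · exact Or.inr (Set.not_nonempty_iff_eq_empty.1 hE)
  · rintro S i ⟨hS, hi⟩ q hq
    have hb : Bundle G (g S i) = S := (hg S hS).1 hi
    have hq' : (q, g S i) ∈ G := by rw [← hb] at hq; exact hq
    obtain ⟨R, hR, hR'⟩ := h q _ hq'
    have hdec : (S = Bundle G E ∧ i = 1) ↔ g S i = E := by
      constructor
      · rintro ⟨h1, rfl⟩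
        exact hgE S h1.symm
      · intro h1
        have hSE : Bundle G E = S := by rw [← h1]; exact hb
        refine ⟨hSE.symm, (hg S hS).2 hi ⟨le_rfl, hfinE S hS hSE⟩ ?_⟩
        rw [h1, hgE S hSE]
    refine ⟨R, ?_, ?_⟩
    · have : decide (S = Bundle G E ∧ i = 1) = decide (g S i = E) := by
        simp only [hdec]
      rw [this]
      convert hR
    · intro d u r hr
      cases u
      · exact (hR' d).2 r hr
      · exact (hR' d).1 r hr
  · intro d
    refine ⟨Bundle (if d then H1 else H0) E, ?_, ?_, ?_⟩
    · simp [hgE _ rfl]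
    · intro S i _
      simp
    · intro S' hS'
      have key : ∀ H : Set (M.Q × ℕ), H.Finite →
          Set.ncard {p : Set M.Q × ℕ | AbsDatum (AbstractOf G) p.1 p.2 ∧ p ≠ (Bundle G E, 1) ∧
            Bundle H (g p.1 p.2) = S'} + (if Bundle H E = S' then 1 else 0) ≤ AbstractOf H S' := by
        intro H hH
        set P := {p : Set M.Q × ℕ | AbsDatum (AbstractOf G) p.1 p.2 ∧ p ≠ (Bundle G E, 1) ∧
            Bundle H (g p.1 p.2) = S'} with hP
        have hb : ∀ p ∈ P, Bundle G (g p.1 p.2) = p.1 := fun p hp => (hg _ hp.1.1).1 hp.1.2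
        have hinj : Set.InjOn (fun p : Set M.Q × ℕ => g p.1 p.2) P := by
          rintro ⟨S, i⟩ hp ⟨T, j⟩ hq hpq
          have h1 := hb _ hp
          have h2 := hb _ hq
          simp only at hpq h1 h2
          rw [hpq, h2] at h1
          subst h1
          exact Prod.ext rfl ((hg _ hp.1.1).2 hp.1.2 hq.1.2 hpq)
        have hnE : E ∉ (fun p : Set M.Q × ℕ => g p.1 p.2) '' P := by
          rintro ⟨⟨S, i⟩, hp, hpE⟩
          have h1 := hb _ hp
          simp only at hpE h1
          rw [hpE] at h1
          apply hp.2.1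
          have : i = 1 := by
            refine (hg S hp.1.1).2 hp.1.2 ⟨le_rfl, hfinE S hp.1.1 h1⟩ ?_
            rw [hgE S h1]; exact hpE
          rw [this, h1]
        have hPf : P.Finite := (finite_absData (AbstractOf G)).subset fun p hp => hp.1
        rw [← Set.ncard_image_of_injOn hinj]
        unfold AbstractOf
        split_ifs with hE
        · rw [← Set.ncard_insert_of_notMem hnE (hPf.image _)]
          refine Set.ncard_le_ncard ?_ (finite_bundle hH hS')
          rintro D (rfl | ⟨p, hp, rfl⟩)
          · exact hE
          · exact hp.2.2
        · refine Set.ncard_le_ncard ?_ (finite_bundle hH hS')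
          rintro D ⟨p, hp, rfl⟩
          exact hp.2.2
      cases d
      · simpa using key H0 hH0
      · simpa using key H1 hH1

/-- Abstract transitions can be concretised. -/
theorem trans_of_abs {A : Type} (M : ATRA A) (a : A) (Qeq : Set M.Q)
    (w : Bool → Set M.Q → ℕ) (v : Set M.Q → ℕ) (G : Set (M.Q × ℕ)) (hG : Bounded G v)
    (h : M.AbsTrans a Qeq v (w false) (w true)) :
    ∃ (E : ℕ) (H : Bool → Set (M.Q × ℕ)), M.Trans a E G (H false) (H true) ∧
      (∀ d, Bounded (H d) (w d)) ∧
      ((∃ D, Bundle G D = Qeq) → Qeq.Nonempty → Bundle G E = Qeq) := by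
  classical
  haveI := M.fin
  obtain ⟨hGf, hGv⟩ := hG
  obtain ⟨_, R', hR', hReq⟩ := h
  choose Req hReq1 hReq2 hReq3 using hReq
  obtain ⟨E, hE1, hE2⟩ : ∃ E : ℕ, (Bundle G E = Qeq ∨ Bundle G E = ∅) ∧
      ((∃ D, Bundle G D = Qeq) → Qeq.Nonempty → Bundle G E = Qeq) := by
    by_cases hD : ∃ D, Bundle G D = Qeq
    · obtain ⟨D, hD⟩ := hD
      exact ⟨D, Or.inl hD, fun _ _ => hD⟩
    · obtain ⟨D, hD'⟩ := (finite_data hGf).exists_notMem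
      exact ⟨D, Or.inr (Set.not_nonempty_iff_eq_empty.1 hD'), fun h' => absurd h' hD⟩
  have hidx : ∀ S : Set M.Q, ∃ f : ℕ → ℕ, S.Nonempty →
      (Set.BijOn f {D | Bundle G D = S} (Set.Icc 1 (AbstractOf G S)) ∧
        (Bundle G E = S → f E = 1)) := by
    intro S
    by_cases hS : S.Nonempty
    · obtain ⟨f, hf, hf1⟩ := exists_index _ (finite_bundle hGf hS) E
      exact ⟨f, fun _ => ⟨hf, hf1⟩⟩
    · exact ⟨id, fun h' => absurd h' hS⟩
  choose f hf using hidx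
  set idx : ℕ → ℕ := fun D => f (Bundle G D) D with hidxdef
  have hdat : ∀ D, (Bundle G D).Nonempty → AbsDatum v (Bundle G D) (idx D) := by
    intro D hD
    have := (hf _ hD).1.mapsTo (show D ∈ {D' | Bundle G D' = Bundle G D} from rfl)
    exact ⟨hD, this.1, this.2.trans (hGv _ hD)⟩
  have hdec : ∀ D, (Bundle G D).Nonempty → ((Bundle G D = Qeq ∧ idx D = 1) ↔ D = E) := by
    intro D hD
    constructor
    · rintro ⟨h1, h2⟩
      have hEQ := hE2 ⟨D, h1⟩ (h1 ▸ hD)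
      have hED : Bundle G E = Bundle G D := by rw [hEQ, h1]
      refine (hf _ hD).1.injOn (show D ∈ {D' | Bundle G D' = Bundle G D} from rfl) hED ?_
      rw [(hf _ hD).2 hED]; exact h2
    · rintro rfl
      rcases hE1 with h1 | h1
      · exact ⟨h1, (hf _ hD).2 rfl⟩
      · rw [h1] at hD; simp at hD
  have hinj : ∀ D D', (Bundle G D).Nonempty → Bundle G D = Bundle G D' → idx D = idx D' →
      D = D' := by
    intro D D' hD hb hi
    refine (hf _ hD).1.injOn (show D ∈ {D' | Bundle G D' = Bundle G D} from rfl) hb.symm ?_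
    simp only [hidxdef] at hi
    rw [hi, hb]
  let H : Bool → Set (M.Q × ℕ) := fun d => {x | if x.2 = E then x.1 ∈ Req d else
      (Bundle G x.2).Nonempty ∧ x.1 ∈ R' (Bundle G x.2) (idx x.2) d false}
  have hHE : ∀ d, Bundle (H d) E = Req d := by
    intro d; ext q; simp [H, Bundle]
  have hHD : ∀ d D, D ≠ E → (Bundle G D).Nonempty →
      Bundle (H d) D = R' (Bundle G D) (idx D) d false := by
    intro d D hD hn; ext q
    change (if D = E then _ else _) ↔ _
    rw [if_neg hD]
    exact ⟨fun h => h.2, fun h => ⟨hn, h⟩⟩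
  have hHD' : ∀ d D, D ≠ E → (Bundle (H d) D).Nonempty → (Bundle G D).Nonempty := by
    rintro d D hD ⟨q, hq⟩
    change (if D = E then _ else _) at hq
    rw [if_neg hD] at hq
    exact hq.1
  refine ⟨E, H, ?_, ?_, hE2⟩
  · intro q D hqD
    have hq : q ∈ Bundle G D := hqD
    have hn : (Bundle G D).Nonempty := ⟨q, hq⟩
    obtain ⟨R, hR, hRs⟩ := hR' _ _ (hdat D hn) q hq
    refine ⟨R, ?_, ?_⟩
    · have : decide (Bundle G D = Qeq ∧ idx D = 1) = decide (D = E) := by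
        simp only [hdec D hn]
      rw [this] at hR
      convert hR
    · intro d
      have hHd : (if d then H true else H false) = H d := by cases d <;> rfl
      rw [hHd]
      constructor
      · intro r hr
        change r ∈ Bundle (H d) E
        rw [hHE]
        exact hReq2 d _ _ (hdat D hn) (hRs _ _ hr)
      · intro r hr
        change r ∈ Bundle (H d) D
        by_cases hDE : D = E
        · obtain ⟨h1, h2⟩ := (hdec D hn).2 hDE
          have := hRs _ _ hr
          rw [h1, h2] at this
          rw [hDE, hHE]
          exact hReq1 d this
        · rw [hHD d D hDE hn]
          exact hRs _ _ hr
  · intro d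
    constructor
    · have : H d ⊆ Set.univ ×ˢ (insert E {D | (Bundle G D).Nonempty}) := by
        rintro ⟨q, D⟩ hq
        refine ⟨trivial, ?_⟩
        by_cases hDE : D = E
        · exact Or.inl hDE
        · exact Or.inr (hHD' d D hDE ⟨q, hq⟩)
      exact (Set.finite_univ.prod ((finite_data hGf).insert E)).subset this
    · intro S' hS'
      have h3 := hReq3 d S' hS'
      have hwd : (if d then w true else w false) = w d := by cases d <;> rfl
      rw [hwd] at h3
      refine le_trans ?_ h3
      set P := {p : Set M.Q × ℕ | AbsDatum v p.1 p.2 ∧ p ≠ (Qeq, 1) ∧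
            R' p.1 p.2 d false = S'} with hP
      have hPf : P.Finite := (finite_absData v).subset fun p hp => hp.1
      have hX : ({D | Bundle (H d) D = S'} \ {E}).ncard ≤ P.ncard := by
        refine Set.ncard_le_ncard_of_injOn (fun D => (Bundle G D, idx D)) ?_ ?_ hPf
        · rintro D ⟨hD, hDE⟩
          have hDE : D ≠ E := hDE
          have hD : Bundle (H d) D = S' := hD
          have hn := hHD' d D hDE (hD ▸ hS')
          refine ⟨hdat D hn, ?_, ?_⟩
          · intro heq
            exact hDE ((hdec D hn).1 ⟨congrArg Prod.fst heq, congrArg Prod.snd heq⟩)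
          · rw [← hD, hHD d D hDE hn]
        · rintro D ⟨hD, hDE⟩ D' _ heq
          have hDE : D ≠ E := hDE
          have hD : Bundle (H d) D = S' := hD
          have hn := hHD' d D hDE (hD ▸ hS')
          exact hinj D D' hn (congrArg Prod.fst heq) (congrArg Prod.snd heq)
      unfold AbstractOf
      split_ifs with hE
      · have := Set.ncard_le_ncard_diff_add_ncard {D | Bundle (H d) D = S'} {E}
        rw [Set.ncard_singleton] at this
        omega
      · rw [Set.diff_singleton_eq_self] at hX
        · omega
        · intro h'
          apply hE
          rw [← hHE]; exact h'

/-- Building a concrete run, on reversed node names. -/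
def revRun {Q A : Type} (lab : Node → Option A) (G0 : Set (Q × ℕ))
    (st : Node → Set (Q × ℕ) → Bool → Set (Q × ℕ)) : List Bool → Set (Q × ℕ)
  | [] => G0
  | d :: m => if (lab m.reverse).isSome then st m.reverse (revRun lab G0 st m) d else ∅

/-- An ATRA₁ has an accepting abstract run on a finite tree `t`
iff it has a final run on some (finite) data tree `τ` with `tree(τ) = t`. -/
theorem absrun_iff_run {A : Type} [Fintype A] (M : ATRA A) (t : BTree A)
    (ht : t.Finite) :
    (∃ ρ : M.AbsRun t, ρ.Accepting) ↔
      (∃ τ : DataTree A, τ.Finite ∧ τ.toTree = t ∧ ∃ ρ : M.Run τ, ρ.Final) := by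
  classical
  haveI := M.fin
  constructor
  · rintro ⟨ρ, hacc⟩
    choose Qf hQf hQI using ρ.step
    have hstep : ∀ (n : Node) (G : Set (M.Q × ℕ)), ∃ (E : ℕ) (H : Bool → Set (M.Q × ℕ)),
        ∀ a (ha : t.label n = some a), Bounded G (ρ.v n) →
          M.Trans a E G (H false) (H true) ∧ (∀ d, Bounded (H d) (ρ.v (n ++ [d]))) ∧
          ((∃ D, Bundle G D = Qf n a ha) → (Qf n a ha).Nonempty → Bundle G E = Qf n a ha) := by
      intro n G
      by_cases hG : Bounded G (ρ.v n)
      · by_cases hn : ∃ a, t.label n = some a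
        swap
        · exact ⟨0, fun _ => ∅, fun a ha => absurd ⟨a, ha⟩ hn⟩
        · obtain ⟨a, hl⟩ := hn
          obtain ⟨E, H, hH⟩ := trans_of_abs M a _ (fun d => ρ.v (n ++ [d])) _ G hG (hQf n a hl)
          refine ⟨E, H, fun b hb _ => ?_⟩
          obtain rfl : a = b := by simpa [hl] using hb
          exact hH
      · exact ⟨0, fun _ => ∅, fun a ha h => absurd h hG⟩
    choose E H hEH using hstep
    obtain ⟨a0, ha0⟩ := Option.isSome_iff_exists.1 t.root_nonleaf
    set Q0 := Qf [] a0 ha0 with hQ0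
    have hqI : M.qI ∈ Q0 := hQI [] a0 ha0 rfl
    let g : Node → Set (M.Q × ℕ) := fun n => revRun t.label (Q0 ×ˢ {0}) H n.reverse
    have g0 : g [] = Q0 ×ˢ {0} := rfl
    have gs : ∀ n d, g (n ++ [d]) = if (t.label n).isSome then H n (g n) d else ∅ := by
      intro n d
      simp [g, revRun]
    have hb0 : Bundle (g []) 0 = Q0 := by
      ext q; simp [g0, Bundle]
    have hB : ∀ n, Bounded (g n) (ρ.v n) := by
      intro n
      induction n using List.reverseRecOn with
      | nil =>
        rw [g0]
        refine ⟨(Set.toFinite Q0).prod (Set.finite_singleton 0), fun S hS => ?_⟩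
        by_cases hSQ : S = Q0
        · subst hSQ
          have hpos : 0 < ρ.v [] Q0 := by
            rcases (hQf [] a0 ha0).1 with h | h
            · exact h
            · exact absurd h (Set.nonempty_iff_ne_empty.1 hS)
          refine le_trans ?_ hpos
          have : {D : ℕ | Bundle (Q0 ×ˢ {0}) D = Q0} ⊆ {0} := by
            intro D hD
            have hD : Bundle (Q0 ×ˢ {0}) D = Q0 := hD
            rw [← hD] at hqI
            exact hqI.2
          simpa [AbstractOf] using Set.ncard_le_ncard this
        · have : {D : ℕ | Bundle (Q0 ×ˢ {0}) D = S} = ∅ := by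
            rw [Set.eq_empty_iff_forall_notMem]
            intro D hD
            have hD : Bundle (Q0 ×ˢ {0}) D = S := hD
            obtain ⟨q, hq⟩ := hS
            rw [← hD] at hq
            have h0 : D = 0 := hq.2
            subst h0
            exact hSQ (hD.symm.trans hb0)
          simp [AbstractOf, this]
      | append_singleton n d ih =>
        rw [gs]
        split_ifs with hl
        · obtain ⟨a, ha⟩ := Option.isSome_iff_exists.1 hl
          exact (hEH n (g n) a ha ih).2.1 d
        · exact bounded_empty _
    let τ : DataTree A :=
      { label := t.label
        dlabel := fun n => (t.label n).map fun _ => E n (g n)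
        root_nonleaf := t.root_nonleaf
        domain_eq := fun n => by simp
        tree_cond := t.tree_cond }
    let r : M.Run τ :=
      { G := g
        finite := fun n => (hB n).1
        support := by
          intro n hn
          rcases List.eq_nil_or_concat n with rfl | ⟨m, d, rfl⟩
          · exact absurd (Or.inl rfl) hn
          · rw [List.concat_eq_append, gs, if_neg]
            intro hl
            exact hn (Or.inr ⟨m, d, List.concat_eq_append, hl⟩)
        init := by
          refine ⟨E [] (g []), by simp [τ, ha0], ?_⟩
          have := (hEH [] (g []) a0 ha0 (hB _)).2.2 ⟨0, hb0⟩ ⟨_, hqI⟩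
          change M.qI ∈ Bundle (g []) _
          rw [this]; exact hqI
        step := by
          intro n a D hl hD
          have hl' : t.label n = some a := hl
          have hD' : (t.label n).map (fun _ => E n (g n)) = some D := hD
          rw [hl'] at hD'
          obtain rfl : E n (g n) = D := by simpa using hD'
          rw [gs, gs, if_pos (by simp [hl']), if_pos (by simp [hl'])]
          exact (hEH n (g n) a hl' (hB n)).1 }
    refine ⟨τ, ht, rfl, r, ?_⟩
    intro n hn q D hq
    have hq' : q ∈ Bundle (g n) D := hq
    by_contra hqF
    have h0 := hacc n hn (Bundle (g n) D) (fun h => hqF (h hq'))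
    have h1 := (hB n).2 (Bundle (g n) D) ⟨q, hq'⟩
    have h2 : 0 < AbstractOf (g n) (Bundle (g n) D) :=
      (Set.ncard_pos (finite_bundle (hB n).1 ⟨q, hq'⟩)).2 ⟨D, rfl⟩
    omega
  · rintro ⟨τ, hτ, rfl, ρ, hfin⟩
    refine ⟨⟨fun n => AbstractOf (ρ.G n), ?_⟩, ?_⟩
    · intro n a ha
      have ha' : τ.label n = some a := ha
      obtain ⟨D, hD⟩ := Option.isSome_iff_exists.1 ((τ.domain_eq n).2 (by simp [ha']))
      refine ⟨Bundle (ρ.G n) D, abs_of_trans M a D _ _ _ (ρ.finite _) (ρ.finite _) (ρ.finite _)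
        (ρ.step n a D ha' hD), ?_⟩
      rintro rfl
      obtain ⟨D', hD', hq⟩ := ρ.init
      obtain rfl : D = D' := by simpa [hD] using hD'
      exact hq
    · intro n hn S hS
      have : {D : ℕ | Bundle (ρ.G n) D = S} = ∅ := by
        rw [Set.eq_empty_iff_forall_notMem]
        intro D hD
        have hD : Bundle (ρ.G n) D = S := hD
        apply hS
        intro q hq
        rw [← hD] at hq
        exact hfin n hn q D hq
      simp [AbstractOf, this]
end
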